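/- arXiv:2509.18586 — 7 statements merged into one kernel-verified Lean document; each statement's English description precedes it below -/
import Mathlib

section
/- Let D = (D_h, D_k, D_f) ∈ C_t be a canonical triple of databases, each of size t ≤ 2^n. Then: (i) there are exactly t full chains u_1 → v_1, …, u_t → v_t in D, with pairwise distinct u_i and pairwise distinct v_i; (ii) exactly t(t−1) points u ∈ {0,1}^{2n} have a rightward semi-chain of length 2; (iii) exactly t·(2^n − t) points have a rightward semi-chain of length 1; and (iv) exactly (2^n − t)·2^n points have a rightward semi-chain of length 0. -/
/-!
A collision-free set of chains in which every database entry is used is in bijection with each of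
the three domains, so it has `t` elements, and a chain is determined by its `u` as well as by its
`v`.

For the semi-chain counts, change coordinates on `{0,1}^{2n}` from `(u_L, u_R)` to `(u_L, m)` with
`m = u_R ⊕ D_h(u_L)` (and `m = u_R` where `D_h(u_L) = ⊥`). This is an involution (`toMid`), and it
carries the points of semi-chain length 1 to `Dom(D_h) × Dom(D_k)ᶜ` and those of length 2 to
`Dom(D_h) × Dom(D_k)` minus the pairs `(u_L, m)` read off from full chains: for `u_L ∈ Dom(D_h)` and
`m ∈ Dom(D_k)`, the pair extends to a full chain exactly when `D_f(u_L ⊕ D_k(m)) ≠ ⊥`. The points of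
length 0 are `Dom(D_h)ᶜ × {0,1}^n`.
-/

/-! Common setup: bit strings, databases, chains, canonical triples,
allowable partial injective functions, twirling. -/

instance (w : ℕ) : Fintype (BitVec w) :=
  Fintype.ofEquiv (Fin (2 ^ w)) ⟨BitVec.ofFin, BitVec.toFin, fun _ => rfl, fun _ => rfl⟩

namespace CPO

/-- `W n` is the set of `n`-bit strings. -/
abbrev W (n : ℕ) := BitVec n

/-- `TW n` models `{0,1}^{2n}` as a pair (left half, right half). -/
abbrev TW (n : ℕ) := BitVec n × BitVec n

/-- A database: a partial function from `{0,1}^n` to `{0,1}^n`. -/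
abbrev DB (n : ℕ) := BitVec n → Option (BitVec n)

/-- A triple of databases `(D_h, D_k, D_f)`. -/
abbrev T3 (n : ℕ) := DB n × DB n × DB n

/-- A partial function on `{0,1}^{2n}`. -/
abbrev PF (n : ℕ) := TW n → Option (TW n)

/-- Domain of a database. -/
def dbDom {n : ℕ} (D : DB n) : Set (W n) := {w | D w ≠ none}

/-- Size of a database. -/
noncomputable def dbSize {n : ℕ} (D : DB n) : ℕ := (dbDom D).ncard

/-- Partial injectivity. -/
def PInj {n : ℕ} (I : PF n) : Prop :=
  ∀ x x' y, I x = some y → I x' = some y → x = x'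

def piDom {n : ℕ} (I : PF n) : Set (TW n) := {x | I x ≠ none}

def piIm {n : ℕ} (I : PF n) : Set (TW n) := {y | ∃ x, I x = some y}

noncomputable def piSize {n : ℕ} (I : PF n) : ℕ := (piDom I).ncard

/-- There is a chain `(u, m, v)` in the triple `T = (D_h, D_k, D_f)`:
`D_h(u_L) ⊕ u_R = m = D_f(v_L) ⊕ v_R` and `u_L ⊕ v_L = D_k(m)`. -/
def IsChain {n : ℕ} (T : T3 n) (u : TW n) (m : W n) (v : TW n) : Prop :=
  T.1 u.1 = some (m ^^^ u.2) ∧ T.2.2 v.1 = some (m ^^^ v.2) ∧ T.2.1 m = some (u.1 ^^^ v.1)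

/-- The set of chains of a triple, as triples `(u, (m, v))`. -/
def chainsSet {n : ℕ} (T : T3 n) : Set (TW n × W n × TW n) :=
  {c | IsChain T c.1 c.2.1 c.2.2}

/-- Two chains collide if they share `m`, `u_L` or `v_L`. -/
def Collide {n : ℕ} (c c' : TW n × W n × TW n) : Prop :=
  c.2.1 = c'.2.1 ∨ c.1.1 = c'.1.1 ∨ c.2.2.1 = c'.2.2.1

/-- A triple is canonical if no two distinct chains collide and every
input-output pair of each database participates in exactly one chain. -/
def Canonical {n : ℕ} (T : T3 n) : Prop :=
  (∀ c ∈ chainsSet T, ∀ c' ∈ chainsSet T, c ≠ c' → ¬ Collide c c') ∧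
  (∀ w, T.1 w ≠ none → ∃! c, c ∈ chainsSet T ∧ c.1.1 = w) ∧
  (∀ m, T.2.1 m ≠ none → ∃! c, c ∈ chainsSet T ∧ c.2.1 = m) ∧
  (∀ w, T.2.2 w ≠ none → ∃! c, c ∈ chainsSet T ∧ c.2.2.1 = w)

/-- `Supports T I` : the partial function supported by `T` is exactly `I`
(i.e. `Supp(T) = I`). -/
def Supports {n : ℕ} (T : T3 n) (I : PF n) : Prop :=
  ∀ u v, I u = some v ↔ ∃ m, IsChain T u m v

open Classical in
/-- The partial function supported by a triple (choice-based representative). -/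
noncomputable def suppFun {n : ℕ} (T : T3 n) : PF n :=
  fun u => if h : ∃ v, ∃ m, IsChain T u m v then some h.choose else none

/-- An allowable partial injective function: no input, output, or internal
left collisions. -/
def AllowableI {n : ℕ} (I : PF n) : Prop :=
  PInj I ∧
  (∀ x x', x ∈ piDom I → x' ∈ piDom I → x ≠ x' → x.1 ≠ x'.1) ∧
  (∀ y y', y ∈ piIm I → y' ∈ piIm I → y ≠ y' → y.1 ≠ y'.1) ∧
  (∀ x y x' y', I x = some y → x' ∈ piDom I → y' ∈ piIm I →
    (x, y) ≠ (x', y') → x.1 ^^^ y.1 ≠ x'.1 ^^^ y'.1)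

/-- `A` allows `u` if some extension `A[u→v]` is allowable. -/
def Allows {n : ℕ} (A : PF n) (u : TW n) : Prop :=
  ∃ v, AllowableI (Function.update A u (some v))

/-- `V_{u,A}`: the set of `v` such that `A[u→v]` is allowable. -/
def Vset {n : ℕ} (A : PF n) (u : TW n) : Set (TW n) :=
  {v | AllowableI (Function.update A u (some v))}

/-- `L_{u,A}`: the set of left substrings of elements of `V_{u,A}`. -/
def Lset {n : ℕ} (A : PF n) (u : TW n) : Set (W n) :=
  {c | ∃ v ∈ Vset A u, v.1 = c}

/-- `D(I)`: the set of canonical triples supporting `I`. -/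
def DofA {n : ℕ} (I : PF n) : Set (T3 n) := {T | Canonical T ∧ Supports T I}

end CPO
namespace CPO

/-- The rightward semi-chain from `u` has length 0: `D_h(u_L) = ⊥`. -/
def rsc0 {n : ℕ} (T : T3 n) (u : TW n) : Prop := T.1 u.1 = none

/-- The rightward semi-chain from `u` has length 1. -/
def rsc1 {n : ℕ} (T : T3 n) (u : TW n) : Prop :=
  ∃ z, T.1 u.1 = some z ∧ T.2.1 (u.2 ^^^ z) = none

/-- The rightward semi-chain from `u` has length 2. -/
def rsc2 {n : ℕ} (T : T3 n) (u : TW n) : Prop :=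
  ∃ z w, T.1 u.1 = some z ∧ T.2.1 (u.2 ^^^ z) = some w ∧ T.2.2 (u.1 ^^^ w) = none

/-- The change of coordinates `(u_L, u_R) ↦ (u_L, m)`, where `m = u_R ⊕ D_h(u_L)`; an undefined
`D_h(u_L)` is read as `0`, which makes the map total and involutive. -/
def toMid {n : ℕ} (T : T3 n) (u : TW n) : TW n := (u.1, u.2 ^^^ (T.1 u.1).getD 0)

lemma toMid_toMid {n : ℕ} (T : T3 n) (u : TW n) : toMid T (toMid T u) = u := by
  simp [toMid]

lemma toMid_injective {n : ℕ} (T : T3 n) : Function.Injective (toMid T) :=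
  Function.Involutive.injective (toMid_toMid T)

/-- The cardinality of a set of points can be computed in the coordinates `(u_L, m)`. -/
lemma ncard_eq_of_toMid {n : ℕ} (T : T3 n) {A B : Set (TW n)}
    (h : ∀ u, u ∈ A ↔ toMid T u ∈ B) : A.ncard = B.ncard := by
  have hA : toMid T '' A = B := by
    ext p
    constructor
    · rintro ⟨u, hu, rfl⟩
      exact (h u).1 hu
    · intro hp
      exact ⟨toMid T p, (h _).2 (by rwa [toMid_toMid]), toMid_toMid T p⟩
  rw [← hA, Set.ncard_image_of_injective _ (toMid_injective T)]

lemma natCard_bitVec (n : ℕ) : Nat.card (BitVec n) = 2 ^ n := by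
  rw [Nat.card_congr (⟨BitVec.toFin, BitVec.ofFin, fun _ => rfl, fun _ => rfl⟩ :
    BitVec n ≃ Fin (2 ^ n)), Nat.card_fin]

lemma ncard_compl_dbDom {n : ℕ} (D : DB n) : (dbDom D)ᶜ.ncard = 2 ^ n - dbSize D := by
  rw [Set.ncard_compl, natCard_bitVec, dbSize]

lemma eq_of_collide {n : ℕ} {T : T3 n} (hT : Canonical T) {c c' : TW n × W n × TW n}
    (hc : c ∈ chainsSet T) (hc' : c' ∈ chainsSet T) (h : Collide c c') : c = c' := by
  by_contra hne
  exact hT.1 c hc c' hc' hne h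

/-- Taking `u_L` is a bijection from the chains onto `Dom(D_h)`. -/
lemma ncard_chainsSet {n : ℕ} {T : T3 n} (hT : Canonical T) :
    (chainsSet T).ncard = dbSize T.1 := by
  have himg : (fun c : TW n × W n × TW n => c.1.1) '' chainsSet T = dbDom T.1 := by
    ext w
    constructor
    · rintro ⟨c, hc, rfl⟩
      have := hc.1
      simp [dbDom, this]
    · intro hw
      obtain ⟨c, ⟨hc, hcw⟩, -⟩ := hT.2.1 w hw
      exact ⟨c, hc, hcw⟩
  rw [dbSize, ← himg, Set.InjOn.ncard_image]
  intro c hc c' hc' h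
  exact eq_of_collide hT hc hc' (Or.inr (Or.inl h))

/-- The pairs `(u_L, m)` occurring in full chains. -/
def chainPairs {n : ℕ} (T : T3 n) : Set (TW n) :=
  (fun c : TW n × W n × TW n => (c.1.1, c.2.1)) '' chainsSet T

lemma chainPairs_subset {n : ℕ} (T : T3 n) : chainPairs T ⊆ dbDom T.1 ×ˢ dbDom T.2.1 := by
  rintro _ ⟨c, ⟨h1, -, h3⟩, rfl⟩
  simp [dbDom, h1, h3]

lemma ncard_chainPairs {n : ℕ} {T : T3 n} (hT : Canonical T) :
    (chainPairs T).ncard = dbSize T.1 := by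
  rw [chainPairs, Set.InjOn.ncard_image, ncard_chainsSet hT]
  intro c hc c' hc' h
  exact eq_of_collide hT hc hc' (Or.inl (Prod.ext_iff.1 h).2)

/-- For `m ∈ Dom(D_k)`, a pair `(u_L, m)` with `u_L ∈ Dom(D_h)` extends to a full chain exactly when
`D_f` is defined at `u_L ⊕ D_k(m)`; the remaining halves `u_R` and `v_R` are then forced. -/
lemma mem_chainPairs_iff {n : ℕ} {T : T3 n} {a m z w : W n} (hz : T.1 a = some z)
    (hw : T.2.1 m = some w) : (a, m) ∈ chainPairs T ↔ T.2.2 (a ^^^ w) ≠ none := by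
  constructor
  · rintro ⟨⟨u, m', v⟩, ⟨h1, h2, h3⟩, h⟩
    simp only [Prod.mk.injEq] at h h1 h2 h3
    obtain ⟨rfl, rfl⟩ := h
    rw [hw] at h3
    obtain rfl := Option.some.inj h3
    rw [← BitVec.xor_assoc, BitVec.xor_self, BitVec.zero_xor, h2]
    simp
  · intro h
    obtain ⟨y, hy⟩ := Option.ne_none_iff_exists'.1 h
    refine ⟨((a, m ^^^ z), m, (a ^^^ w, m ^^^ y)), ⟨?_, ?_, ?_⟩, rfl⟩
    · simp [hz]
    · simp [hy]
    · simp [hw]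

lemma rsc1_iff {n : ℕ} (T : T3 n) (u : TW n) :
    rsc1 T u ↔ toMid T u ∈ dbDom T.1 ×ˢ (dbDom T.2.1)ᶜ := by
  cases hz : T.1 u.1 <;> simp [rsc1, toMid, dbDom, hz]

lemma rsc2_iff {n : ℕ} (T : T3 n) (u : TW n) :
    rsc2 T u ↔ toMid T u ∈ (dbDom T.1 ×ˢ dbDom T.2.1) \ chainPairs T := by
  cases hz : T.1 u.1 with
  | none => simp [rsc2, toMid, dbDom, hz]
  | some z =>
    cases hw : T.2.1 (u.2 ^^^ z) with
    | none => simp [rsc2, toMid, dbDom, hz, hw]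
    | some w =>
      have h := mem_chainPairs_iff hz hw
      simp [rsc2, toMid, dbDom, hz, hw, h]

/-- Chain/semi-chain counts for a canonical triple of size `t`. -/
theorem canonical_counts {n t : ℕ} (hn : 1 ≤ n) (T : T3 n) (hT : Canonical T)
    (hh : dbSize T.1 = t) (hk : dbSize T.2.1 = t) (hf : dbSize T.2.2 = t)
    (ht : t ≤ 2 ^ n) :
    (chainsSet T).ncard = t ∧
    (∀ c ∈ chainsSet T, ∀ c' ∈ chainsSet T, c.1 = c'.1 → c = c') ∧
    (∀ c ∈ chainsSet T, ∀ c' ∈ chainsSet T, c.2.2 = c'.2.2 → c = c') ∧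
    {u : TW n | rsc2 T u}.ncard = t * (t - 1) ∧
    {u : TW n | rsc1 T u}.ncard = t * (2 ^ n - t) ∧
    {u : TW n | rsc0 T u}.ncard = (2 ^ n - t) * 2 ^ n := by
  refine ⟨(ncard_chainsSet hT).trans hh, ?_, ?_, ?_, ?_, ?_⟩
  · intro c hc c' hc' h
    exact eq_of_collide hT hc hc' (Or.inr (Or.inl (congrArg Prod.fst h)))
  · intro c hc c' hc' h
    exact eq_of_collide hT hc hc' (Or.inr (Or.inr (congrArg Prod.fst h)))
  · rw [ncard_eq_of_toMid T (A := {u | rsc2 T u}) (rsc2_iff T),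
      Set.ncard_sdiff (chainPairs_subset T), Set.ncard_prod,
      ncard_chainPairs hT, ← dbSize, ← dbSize, hh, hk, Nat.mul_sub_one]
  · rw [ncard_eq_of_toMid T (A := {u | rsc1 T u}) (rsc1_iff T),
      Set.ncard_prod, ncard_compl_dbDom, ← dbSize, hh, hk]
  · have h0 : {u : TW n | rsc0 T u} = (dbDom T.1)ᶜ ×ˢ Set.univ := by
      ext u
      simp [rsc0, dbDom]
    rw [h0, Set.ncard_prod, ncard_compl_dbDom, Set.ncard_univ, natCard_bitVec, hh]

end CPO
end

section
/- Let I be a partial injective function on {0,1}^{2n} with |I| = t. Then there exists a canonical triple D = (D_h, D_k, D_f) with Supp(D) = I (that is, D(I) ≠ ∅) if and only if I is allowable, i.e., I has no input left collision, no output left collision, and no internal left collision. -/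
namespace CPO

/-- The database whose graph is a given functional relation. -/
lemma exists_db_of_functional {n : ℕ} (R : W n → W n → Prop)
    (hR : ∀ a b b', R a b → R a b' → b = b') :
    ∃ D : DB n, ∀ a b, D a = some b ↔ R a b := by
  classical
  refine ⟨fun a => if h : ∃ b, R a b then some h.choose else none, fun a b => ?_⟩
  by_cases h : ∃ b, R a b
  · simp only [h, dif_pos, Option.some.injEq]
    exact ⟨fun e => e ▸ h.choose_spec, fun hb => hR _ _ _ h.choose_spec hb⟩
  · simp only [h, dif_neg, not_false_eq_true, reduceCtorEq, false_iff]
    exact fun hb => h ⟨b, hb⟩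

lemma AllowableI.eq_of_left {n : ℕ} {I : PF n} (hI : AllowableI I) {x x' y y' : TW n}
    (h : I x = some y) (h' : I x' = some y') (e : x.1 = x'.1) : x = x' ∧ y = y' := by
  have hx : x = x' := by
    by_contra hne
    exact hI.2.1 x x' (by simp [piDom, h]) (by simp [piDom, h']) hne e
  subst hx
  exact ⟨rfl, by simpa [h] using h'⟩

lemma AllowableI.eq_of_right {n : ℕ} {I : PF n} (hI : AllowableI I) {x x' y y' : TW n}
    (h : I x = some y) (h' : I x' = some y') (e : y.1 = y'.1) : x = x' ∧ y = y' := by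
  have hy : y = y' := by
    by_contra hne
    exact hI.2.2.1 y y' ⟨x, h⟩ ⟨x', h'⟩ hne e
  subst hy
  exact ⟨hI.1 _ _ _ h h', rfl⟩

theorem allowable_of_canonical {n : ℕ} {I : PF n} (hinj : PInj I) {T : T3 n}
    (hT : Canonical T) (hS : Supports T I) : AllowableI I := by
  have key : ∀ {u m v u' m' v'}, IsChain T u m v → IsChain T u' m' v' →
      (m = m' ∨ u.1 = u'.1 ∨ v.1 = v'.1) → u = u' ∧ v = v' := by
    intro u m v u' m' v' hc hc' hcol
    have : (u, m, v) = (u', m', v') := by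
      by_contra hne
      exact hT.1 (u, m, v) hc (u', m', v') hc' hne hcol
    simp only [Prod.mk.injEq] at this
    exact ⟨this.1, this.2.2⟩
  have hin : ∀ x x', x ∈ piDom I → x' ∈ piDom I → x.1 = x'.1 → x = x' := by
    intro x x' hx hx' e
    obtain ⟨y, hy⟩ := Option.ne_none_iff_exists'.1 hx
    obtain ⟨y', hy'⟩ := Option.ne_none_iff_exists'.1 hx'
    obtain ⟨m, hm⟩ := (hS _ _).1 hy
    obtain ⟨m', hm'⟩ := (hS _ _).1 hy'
    exact (key hm hm' (Or.inr (Or.inl e))).1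
  have hout : ∀ y y', y ∈ piIm I → y' ∈ piIm I → y.1 = y'.1 → y = y' := by
    rintro y y' ⟨x, hy⟩ ⟨x', hy'⟩ e
    obtain ⟨m, hm⟩ := (hS _ _).1 hy
    obtain ⟨m', hm'⟩ := (hS _ _).1 hy'
    exact (key hm hm' (Or.inr (Or.inr e))).2
  refine ⟨hinj, fun x x' hx hx' hne e => hne (hin x x' hx hx' e),
    fun y y' hy hy' hne e => hne (hout y y' hy hy' e), ?_⟩
  intro x y x' y' hxy hx' hy' hne e
  obtain ⟨m, hm⟩ := (hS _ _).1 hxy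
  obtain ⟨z, hz⟩ := Option.ne_none_iff_exists'.1 hx'
  obtain ⟨w, hw⟩ := hy'
  obtain ⟨m₁, h₁⟩ := (hS _ _).1 hz
  obtain ⟨m₂, h₂⟩ := (hS _ _).1 hw
  -- The mixed chain through `m`, with right halves corrected for the values of `D_h` and `D_f`.
  have hmix : IsChain T (x'.1, m ^^^ (m₁ ^^^ x'.2)) m (y'.1, m ^^^ (m₂ ^^^ y'.2)) := by
    refine ⟨?_, ?_, ?_⟩
    · simp [h₁.1, ← BitVec.xor_assoc]
    · simp [h₂.2.1, ← BitVec.xor_assoc]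
    · simp [hm.2.2, e]
  obtain ⟨hu, hv⟩ := key hm hmix (Or.inl rfl)
  apply hne
  rw [hin x x' (by simp [piDom, hxy]) hx' (by rw [hu]), hout y y' ⟨x, hxy⟩ ⟨w, hw⟩ (by rw [hv])]

/-- A triple whose chains are the pairs of `I`, each with its input left half as middle value. -/
lemma AllowableI.exists_triple {n : ℕ} {I : PF n} (hI : AllowableI I) :
    ∃ T : T3 n, (∀ u m v, IsChain T u m v ↔ I u = some v ∧ m = u.1) ∧
      (∀ w, T.1 w ≠ none → ∃ x y, I x = some y ∧ x.1 = w) ∧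
      (∀ m, T.2.1 m ≠ none → ∃ x y, I x = some y ∧ x.1 = m) ∧
      (∀ w, T.2.2 w ≠ none → ∃ x y, I x = some y ∧ y.1 = w) := by
  obtain ⟨Dh, hh⟩ := exists_db_of_functional
    (fun a b => ∃ x y, I x = some y ∧ x.1 = a ∧ x.1 ^^^ x.2 = b) (by
      rintro a b b' ⟨x, y, h, e, rfl⟩ ⟨x', y', h', e', rfl⟩
      obtain ⟨rfl, rfl⟩ := hI.eq_of_left h h' (e.trans e'.symm)
      rfl)
  obtain ⟨Dk, hk⟩ := exists_db_of_functional
    (fun a b => ∃ x y, I x = some y ∧ x.1 = a ∧ x.1 ^^^ y.1 = b) (by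
      rintro a b b' ⟨x, y, h, e, rfl⟩ ⟨x', y', h', e', rfl⟩
      obtain ⟨rfl, rfl⟩ := hI.eq_of_left h h' (e.trans e'.symm)
      rfl)
  obtain ⟨Df, hf⟩ := exists_db_of_functional
    (fun a b => ∃ x y, I x = some y ∧ y.1 = a ∧ x.1 ^^^ y.2 = b) (by
      rintro a b b' ⟨x, y, h, e, rfl⟩ ⟨x', y', h', e', rfl⟩
      obtain ⟨rfl, rfl⟩ := hI.eq_of_right h h' (e.trans e'.symm)
      rfl)
  refine ⟨(Dh, Dk, Df), fun u m v => ⟨?_, ?_⟩, ?_, ?_, ?_⟩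
  · rintro ⟨h₁, h₂, h₃⟩
    obtain ⟨x₁, y₁, i₁, e₁, f₁⟩ := (hh _ _).1 h₁
    obtain ⟨x₂, y₂, i₂, e₂, f₂⟩ := (hf _ _).1 h₂
    obtain ⟨x, y, i, rfl, f⟩ := (hk _ _).1 h₃
    have hp : (x, y) = (x₁, y₂) := by
      by_contra hne
      exact hI.2.2.2 x y x₁ y₂ i (by simp [piDom, i₁]) ⟨x₂, i₂⟩ hne (by rw [f, e₁, e₂])
    obtain ⟨rfl, rfl⟩ := Prod.mk.inj hp
    obtain rfl := hI.1 _ _ _ i i₂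
    have hu : u = x := Prod.ext e₁.symm ((BitVec.xor_right_inj _).1 f₁).symm
    have hv : v = y := Prod.ext e₂.symm ((BitVec.xor_right_inj _).1 f₂).symm
    subst hu hv
    exact ⟨i, rfl⟩
  · rintro ⟨i, rfl⟩
    exact ⟨(hh _ _).2 ⟨u, v, i, rfl, rfl⟩, (hf _ _).2 ⟨u, v, i, rfl, rfl⟩,
      (hk _ _).2 ⟨u, v, i, rfl, rfl⟩⟩
  · intro w hw
    obtain ⟨b, hb⟩ := Option.ne_none_iff_exists'.1 hw
    obtain ⟨x, y, i, e, -⟩ := (hh _ _).1 hb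
    exact ⟨x, y, i, e⟩
  · intro w hw
    obtain ⟨b, hb⟩ := Option.ne_none_iff_exists'.1 hw
    obtain ⟨x, y, i, e, -⟩ := (hk _ _).1 hb
    exact ⟨x, y, i, e⟩
  · intro w hw
    obtain ⟨b, hb⟩ := Option.ne_none_iff_exists'.1 hw
    obtain ⟨x, y, i, e, -⟩ := (hf _ _).1 hb
    exact ⟨x, y, i, e⟩

theorem AllowableI.exists_canonical {n : ℕ} {I : PF n} (hI : AllowableI I) :
    ∃ T : T3 n, Canonical T ∧ Supports T I := by
  obtain ⟨T, hc, h₁, h₂, h₃⟩ := hI.exists_triple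
  have hcol : ∀ c ∈ chainsSet T, ∀ c' ∈ chainsSet T, Collide c c' → c = c' := by
    rintro ⟨u, m, v⟩ h ⟨u', m', v'⟩ h' hcol
    obtain ⟨i, rfl⟩ := (hc u m v).1 h
    obtain ⟨i', rfl⟩ := (hc u' m' v').1 h'
    have : u = u' ∧ v = v' := by
      rcases hcol with e | e | e
      · exact hI.eq_of_left i i' e
      · exact hI.eq_of_left i i' e
      · exact hI.eq_of_right i i' e
    obtain ⟨rfl, rfl⟩ := this
    rfl
  have hmem : ∀ {x y}, I x = some y → (x, x.1, y) ∈ chainsSet T :=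
    fun i => (hc _ _ _).2 ⟨i, rfl⟩
  refine ⟨T, ⟨fun c h c' h' hne hco => hne (hcol c h c' h' hco), ?_, ?_, ?_⟩, fun u v => ?_⟩
  · intro w hw
    obtain ⟨x, y, i, e⟩ := h₁ w hw
    exact ⟨(x, x.1, y), ⟨hmem i, e⟩, fun c ⟨h, h'⟩ =>
      hcol _ h _ (hmem i) (Or.inr (Or.inl (h'.trans e.symm)))⟩
  · intro w hw
    obtain ⟨x, y, i, e⟩ := h₂ w hw
    exact ⟨(x, x.1, y), ⟨hmem i, e⟩, fun c ⟨h, h'⟩ =>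
      hcol _ h _ (hmem i) (Or.inl (h'.trans e.symm))⟩
  · intro w hw
    obtain ⟨x, y, i, e⟩ := h₃ w hw
    exact ⟨(x, x.1, y), ⟨hmem i, e⟩, fun c ⟨h, h'⟩ =>
      hcol _ h _ (hmem i) (Or.inr (Or.inr (h'.trans e.symm)))⟩
  · simp [hc]

/-- A partial injective function `I` is supported by some
canonical triple iff it is allowable. -/
theorem exists_canonical_supporting_iff_allowable {n t : ℕ} (hn : 1 ≤ n)
    (I : PF n) (hinj : PInj I) (hsize : piSize I = t) :
    (∃ T : T3 n, Canonical T ∧ Supports T I) ↔ AllowableI I :=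
  ⟨fun ⟨_, hT, hS⟩ => allowable_of_canonical hinj hT hS, fun hI => hI.exists_canonical⟩

end CPO
end

section
/- Let A be an allowable partial injective function on {0,1}^{2n} with |A| = t, and let u ∈ {0,1}^{2n} \ Dom(A) be allowed by A. Then |L_{u,A}| ≥ 2^n − 2t² − 2t, and for every l ∈ L_{u,A} and every r ∈ {0,1}^n one has l ∥ r ∈ V_{u,A}. -/
namespace CPO

/-- `l` avoids the three families of left halves forbidden to an image `v` of `u`: left halves of
outputs of `A`, left halves making `x' → v` collide internally with a pair of `A`, and left halves making
`u → v` collide internally with a combination of an old input and an old output. -/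
def FreeLeft {n : ℕ} (A : PF n) (u : TW n) (l : W n) : Prop :=
  (∀ y ∈ piIm A, y.1 ≠ l) ∧
  (∀ x y x', A x = some y → x' ∈ piDom A → l ≠ x.1 ^^^ y.1 ^^^ x'.1) ∧
  (∀ x' ∈ piDom A, ∀ y' ∈ piIm A, l ≠ u.1 ^^^ x'.1 ^^^ y'.1)

lemma xor_move {n : ℕ} (a b c d : W n) : a ^^^ b = c ^^^ d ↔ d = a ^^^ b ^^^ c := by
  constructor
  · intro h
    rw [h, BitVec.xor_comm c d, BitVec.xor_assoc, BitVec.xor_self, BitVec.xor_zero]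
  · rintro rfl
    rw [BitVec.xor_comm c, BitVec.xor_assoc, BitVec.xor_self, BitVec.xor_zero]

lemma update_eq_some {n : ℕ} {A : PF n} {u v x y : TW n} (hu : A u = none) :
    Function.update A u (some v) x = some y ↔ (x = u ∧ y = v) ∨ A x = some y := by
  by_cases h : x = u
  · subst h
    simp [hu, eq_comm]
  · simp [h]

lemma mem_piDom_update {n : ℕ} {A : PF n} {u v x : TW n} :
    x ∈ piDom (Function.update A u (some v)) ↔ x = u ∨ x ∈ piDom A := by
  by_cases h : x = u
  · subst h
    simp [piDom]
  · simp [piDom, h]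

lemma mem_piIm_update {n : ℕ} {A : PF n} {u v y : TW n} (hu : A u = none) :
    y ∈ piIm (Function.update A u (some v)) ↔ y = v ∨ y ∈ piIm A := by
  simp only [piIm, Set.mem_ofPred_eq, update_eq_some hu, exists_or]
  simp

lemma ne_of_mem_piDom {n : ℕ} {A : PF n} {u x : TW n} (hu : A u = none)
    (hx : x ∈ piDom A) : x ≠ u := by
  rintro rfl
  exact hx hu

lemma mem_piIm_of_eq {n : ℕ} {A : PF n} {x y : TW n} (h : A x = some y) : y ∈ piIm A :=
  ⟨x, h⟩

lemma mem_piDom_of_eq {n : ℕ} {A : PF n} {x y : TW n} (h : A x = some y) : x ∈ piDom A := by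
  simp [piDom, h]

/-- In particular an allowed `v` is not an output of `A` (by injectivity), which is what turns
the collision conditions on distinct outputs and pairs into conditions on `v.1`. -/
lemma freeLeft_of_mem_Vset {n : ℕ} {A : PF n} {u v : TW n} (hu : A u = none)
    (hv : v ∈ Vset A u) : FreeLeft A u v.1 := by
  obtain ⟨hinj, -, him, hint⟩ := hv
  have hfresh : v ∉ piIm A := by
    rintro ⟨x, hx⟩
    have := hinj x u v ((update_eq_some hu).2 (.inr hx)) ((update_eq_some hu).2 (.inl ⟨rfl, rfl⟩))
    simp [this, hu] at hx
  refine ⟨fun y hy => ?_, fun x y x' hxy hx' => ?_, fun x' hx' y' hy' => ?_⟩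
  · refine him y v ((mem_piIm_update hu).2 (.inr hy)) ((mem_piIm_update hu).2 (.inl rfl)) ?_
    rintro rfl
    exact hfresh hy
  · have := hint x y x' v ((update_eq_some hu).2 (.inr hxy)) (mem_piDom_update.2 (.inr hx'))
      ((mem_piIm_update hu).2 (.inl rfl)) (by
        rintro ⟨⟩
        exact hfresh ⟨x, hxy⟩)
    exact fun h => this ((xor_move _ _ _ _).2 h)
  · have := hint u v x' y' ((update_eq_some hu).2 (.inl ⟨rfl, rfl⟩))
      (mem_piDom_update.2 (.inr hx')) ((mem_piIm_update hu).2 (.inr hy')) (by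
        rintro ⟨⟩
        exact hx' hu)
    intro h
    apply this
    rw [h, BitVec.xor_assoc, ← BitVec.xor_assoc, BitVec.xor_self, BitVec.zero_xor]

/-- Once `u` is allowed at all, whether `v` is a legal image depends only on its left half:
the conditions on `u` that do not mention `v` are inherited from the witness `w`. -/
lemma mem_Vset_of_freeLeft {n : ℕ} {A : PF n} {u w v : TW n} (hA : AllowableI A)
    (hu : A u = none) (hw : w ∈ Vset A u) (hv : FreeLeft A u v.1) : v ∈ Vset A u := by
  obtain ⟨hinj, hdom, him, hint⟩ := hA
  obtain ⟨-, wdom, -, wint⟩ := hw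
  obtain ⟨f1, f2, f3⟩ := hv
  have hleft : ∀ x ∈ piDom A, x.1 ≠ u.1 := fun x hx =>
    wdom x u (mem_piDom_update.2 (.inr hx)) (mem_piDom_update.2 (.inl rfl))
      (ne_of_mem_piDom hu hx)
  have hfresh : v ∉ piIm A := fun h => f1 v h rfl
  have huy : ∀ x y y', A x = some y → y' ∈ piIm A → x.1 ^^^ y.1 ≠ u.1 ^^^ y'.1 := by
    intro x y y' hxy hy'
    refine wint x y u y' ((update_eq_some hu).2 (.inr hxy)) (mem_piDom_update.2 (.inl rfl))
      ((mem_piIm_update hu).2 (.inr hy')) ?_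
    rintro ⟨⟩
    simp [hu] at hxy
  refine ⟨fun x x' y h h' => ?_, fun x x' h h' hne => ?_, fun y y' h h' hne => ?_,
    fun x y x' y' h hx' hy' hne => ?_⟩
  · rw [update_eq_some hu] at h h'
    rcases h with ⟨rfl, rfl⟩ | h <;> rcases h' with ⟨rfl, h'⟩ | h'
    · rfl
    · exact absurd ⟨_, h'⟩ hfresh
    · subst h'
      exact absurd ⟨_, h⟩ hfresh
    · exact hinj _ _ _ h h'
  · rw [mem_piDom_update] at h h'
    rcases h with rfl | h <;> rcases h' with rfl | h'
    · exact absurd rfl hne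
    · exact (hleft _ h').symm
    · exact hleft _ h
    · exact hdom _ _ h h' hne
  · rw [mem_piIm_update hu] at h h'
    rcases h with rfl | h <;> rcases h' with rfl | h'
    · exact absurd rfl hne
    · exact (f1 _ h').symm
    · exact f1 _ h
    · exact him _ _ h h' hne
  · rw [update_eq_some hu] at h
    rw [mem_piDom_update] at hx'
    rw [mem_piIm_update hu] at hy'
    rcases h with ⟨rfl, rfl⟩ | h <;> rcases hx' with rfl | hx' <;> rcases hy' with rfl | hy'
    · exact absurd rfl hne
    · exact fun e => f1 _ hy' (BitVec.xor_right_inj _ |>.1 e).symm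
    · exact fun e => hleft _ hx' (BitVec.xor_left_inj _ |>.1 e).symm
    · intro e
      rw [eq_comm, xor_move] at e
      exact f3 _ hx' _ hy' (by rw [e, BitVec.xor_comm, ← BitVec.xor_assoc])
    · intro e
      rw [xor_move] at e
      exact f3 _ (mem_piDom_of_eq h) _ (mem_piIm_of_eq h)
        (by rw [e, BitVec.xor_comm, ← BitVec.xor_assoc])
    · exact huy _ _ _ h hy'
    · exact fun e => f2 _ _ _ h hx' ((xor_move _ _ _ _).1 e)
    · exact hint _ _ _ _ h hx' hy' hne

lemma ncard_piIm_le {n : ℕ} (A : PF n) : (piIm A).ncard ≤ piSize A := by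
  have hsub : piIm A ⊆ (fun x => (A x).getD (0, 0)) '' piDom A := by
    rintro y ⟨x, hx⟩
    exact ⟨x, mem_piDom_of_eq hx, by simp [hx]⟩
  exact (Set.ncard_le_ncard hsub (Set.toFinite _)).trans (Set.ncard_image_le (Set.toFinite _))

/-- The forbidden left halves are covered by images of `piIm A`, `piDom A × piDom A` and
`piDom A × piIm A`, the middle one because `A` determines `y` from `x`. -/
lemma ncard_not_freeLeft_le {n : ℕ} (A : PF n) (u : TW n) :
    {l | ¬ FreeLeft A u l}.ncard ≤ piSize A + piSize A * piSize A + piSize A * piSize A := by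
  have hsub : {l | ¬ FreeLeft A u l} ⊆
      Prod.fst '' piIm A ∪
      (fun p : TW n × TW n => p.1.1 ^^^ ((A p.1).getD (0, 0)).1 ^^^ p.2.1) ''
        (piDom A ×ˢ piDom A) ∪
      (fun p : TW n × TW n => u.1 ^^^ p.1.1 ^^^ p.2.1) '' (piDom A ×ˢ piIm A) := by
    intro l hl
    by_contra hcon
    simp only [Set.mem_union, not_or] at hcon
    obtain ⟨⟨h1, h2⟩, h3⟩ := hcon
    refine hl ⟨fun y hy e => h1 ⟨y, hy, e⟩, fun x y x' hxy hx' e => h2 ⟨(x, x'), ?_, ?_⟩,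
      fun x' hx' y' hy' e => h3 ⟨(x', y'), ⟨hx', hy'⟩, e.symm⟩⟩
    · exact ⟨mem_piDom_of_eq hxy, hx'⟩
    · simp [hxy, e]
  have him := ncard_piIm_le A
  refine (Set.ncard_le_ncard hsub (Set.toFinite _)).trans <|
    (Set.ncard_union_le _ _).trans (Nat.add_le_add ((Set.ncard_union_le _ _).trans
      (Nat.add_le_add ?_ ?_)) ?_)
  · exact (Set.ncard_image_le (Set.toFinite _)).trans him
  · exact (Set.ncard_image_le (Set.toFinite _)).trans (Set.ncard_prod).le
  · exact (Set.ncard_image_le (Set.toFinite _)).trans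
      ((Set.ncard_prod).le.trans (Nat.mul_le_mul_left _ him))

lemma card_W (n : ℕ) : Nat.card (W n) = 2 ^ n := by
  rw [Nat.card_congr ⟨BitVec.toFin, BitVec.ofFin, fun _ => rfl, fun _ => rfl⟩]
  simp

/-- For allowable `A` of size `t` and `u ∉ Dom(A)` allowed by
`A`: `|L_{u,A}| ≥ 2^n − 2t² − 2t`, and every `l ∈ L_{u,A}` together with any
right half `r` gives `l ∥ r ∈ V_{u,A}`. -/
theorem Lset_large_and_prefix_closed {n t : ℕ} (hn : 1 ≤ n) (A : PF n)
    (hA : AllowableI A) (hsize : piSize A = t)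
    (u : TW n) (hu : A u = none) (hall : Allows A u) :
    ((2 ^ n : ℤ) - 2 * (t : ℤ) ^ 2 - 2 * (t : ℤ) ≤ ((Lset A u).ncard : ℤ)) ∧
    (∀ l ∈ Lset A u, ∀ r : W n, (l, r) ∈ Vset A u) := by
  obtain ⟨w, hw⟩ := hall
  refine ⟨?_, ?_⟩
  · have hsub : {l | ¬ FreeLeft A u l}ᶜ ⊆ Lset A u := fun l hl =>
      ⟨(l, 0), mem_Vset_of_freeLeft hA hu hw (not_not.1 hl), rfl⟩
    have hle := Set.ncard_le_ncard hsub (Set.toFinite _)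
    have hcompl := Set.ncard_add_ncard_compl {l | ¬ FreeLeft A u l}
    have hbad := ncard_not_freeLeft_le A u
    rw [card_W] at hcompl
    rw [hsize] at hbad
    have hnat : 2 ^ n ≤ (t + t * t + t * t) + (Lset A u).ncard := by omega
    zify at hnat
    nlinarith
  · rintro l ⟨v, hv, rfl⟩ r
    have hfree := freeLeft_of_mem_Vset hu hv
    exact mem_Vset_of_freeLeft hA hu hw hfree

end CPO
end

section
/- Fix u ∈ {0,1}^{2n}. For every t ≥ 0 and every canonical triple D ∈ C_{t+1} with u ∈ Dom(Supp(D)), there exists a unique canonical triple D' ∈ C_t with u ∉ Dom(Supp(D')) such that D is a three-extension of D' (D ∈ E³(D')). Moreover, every three-extension of a canonical triple is itself canonical. -/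
namespace CPO

/-- `E` is a one-extension of the canonical triple `D'` with `(l, z)`. -/
def OneExt {n : ℕ} (D' E : T3 n) (l z : W n) : Prop :=
  Canonical D' ∧
  (∃ r, Allows (suppFun D') (l, r)) ∧
  (∀ r : W n, suppFun D' (l, r) = none) ∧
  E = (Function.update D'.1 l (some z), D'.2.1, D'.2.2)

/-- `E` is a two-extension of the canonical triple `D'` with `(l,z),(m,w)`. -/
def TwoExt {n : ℕ} (D' E : T3 n) (l z m w : W n) : Prop :=
  ∃ E1 : T3 n, OneExt D' E1 l z ∧ E1.2.1 m = none ∧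
    (l ^^^ w) ∈ Lset (suppFun D') (l, (0 : W n)) ∧
    E = (E1.1, Function.update E1.2.1 m (some w), E1.2.2)

/-- `E` is a three-extension of the canonical triple `D'` (i.e. `E ∈ E³(D')`). -/
def ThreeExt {n : ℕ} (D' E : T3 n) : Prop :=
  ∃ l z m w z' : W n, ∃ E2 : T3 n, TwoExt D' E2 l z m w ∧
    E = (E2.1, E2.2.1, Function.update E2.2.2 (l ^^^ w) (some z'))

open Classical in
/-- `D[u→⊥]`: remove the chain beginning at `u` (if any). -/
noncomputable def removeChain {n : ℕ} (T : T3 n) (u : TW n) : T3 n :=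
  if h : ∃ v, ∃ m, IsChain T u m v then
    (Function.update T.1 u.1 none,
     Function.update T.2.1 h.choose_spec.choose none,
     Function.update T.2.2 h.choose.1 none)
  else T

end CPO
namespace CPO

/-- The left data `(a, m, b)` of a chain: `a` and `b` lie in the domains of `D_h` and `D_f`, and
`D_k(m) = a ⊕ b`. -/
def Link {n : ℕ} (T : T3 n) (a m b : W n) : Prop :=
  T.1 a ≠ none ∧ T.2.2 b ≠ none ∧ T.2.1 m = some (a ^^^ b)

theorem xor_cancel {n : ℕ} (a b : W n) : a ^^^ (a ^^^ b) = b := by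
  rw [← BitVec.xor_assoc]; simp

theorem xor_inj {n : ℕ} {a b c : W n} (h : a ^^^ b = a ^^^ c) : b = c := by
  rw [← xor_cancel a b, h, xor_cancel]

theorem xor_inj' {n : ℕ} {a b c : W n} (h : b ^^^ a = c ^^^ a) : b = c := by
  rw [BitVec.xor_comm b, BitVec.xor_comm c] at h; exact xor_inj h

theorem IsChain.link {n : ℕ} {T : T3 n} {u : TW n} {m : W n} {v : TW n}
    (h : IsChain T u m v) : Link T u.1 m v.1 := by
  obtain ⟨h1, h2, h3⟩ := h
  exact ⟨by simp [h1], by simp [h2], h3⟩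

theorem Link.exists_chain {n : ℕ} {T : T3 n} {a m b : W n} (h : Link T a m b) :
    ∃ r s, IsChain T (a, r) m (b, s) := by
  obtain ⟨h1, h2, h3⟩ := h
  obtain ⟨p, hp⟩ := Option.ne_none_iff_exists'.1 h1
  obtain ⟨q, hq⟩ := Option.ne_none_iff_exists'.1 h2
  exact ⟨m ^^^ p, m ^^^ q, by simp [hp], by simp [hq], h3⟩

/-- A chain is determined by its left data. -/
theorem IsChain.ext {n : ℕ} {T : T3 n} {u u' : TW n} {m m' : W n} {v v' : TW n}
    (h : IsChain T u m v) (h' : IsChain T u' m' v')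
    (hu : u.1 = u'.1) (hm : m = m') (hv : v.1 = v'.1) : u = u' ∧ v = v' := by
  obtain ⟨h1, h2, -⟩ := h
  obtain ⟨h1', h2', -⟩ := h'
  subst hm
  rw [hu, h1'] at h1
  rw [hv, h2'] at h2
  exact ⟨Prod.ext hu (xor_inj (Option.some.inj h1)).symm,
    Prod.ext hv (xor_inj (Option.some.inj h2)).symm⟩

theorem canonical_iff {n : ℕ} (T : T3 n) : Canonical T ↔
    (∀ a m b a' m' b', Link T a m b → Link T a' m' b' → (a = a' ∨ m = m' ∨ b = b') →
      a = a' ∧ m = m' ∧ b = b') ∧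
    (∀ a, T.1 a ≠ none → ∃ m b, Link T a m b) ∧
    (∀ m, T.2.1 m ≠ none → ∃ a b, Link T a m b) ∧
    (∀ b, T.2.2 b ≠ none → ∃ a m, Link T a m b) := by
  constructor
  · rintro ⟨h0, h1, h2, h3⟩
    refine ⟨?_, ?_, ?_, ?_⟩
    · intro a m b a' m' b' h h' hc
      obtain ⟨r, s, hC⟩ := h.exists_chain
      obtain ⟨r', s', hC'⟩ := h'.exists_chain
      by_contra hne
      refine h0 ((a, r), m, (b, s)) hC ((a', r'), m', (b', s')) hC' ?_ ?_
      · intro he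
        simp only [Prod.mk.injEq] at he
        tauto
      · unfold Collide; tauto
    · intro a ha
      obtain ⟨⟨x, m, y⟩, ⟨hc, rfl⟩, -⟩ := h1 a ha
      exact ⟨m, y.1, IsChain.link hc⟩
    · intro a ha
      obtain ⟨⟨x, m, y⟩, ⟨hc, rfl⟩, -⟩ := h2 a ha
      exact ⟨x.1, y.1, IsChain.link hc⟩
    · intro a ha
      obtain ⟨⟨x, m, y⟩, ⟨hc, rfl⟩, -⟩ := h3 a ha
      exact ⟨x.1, m, IsChain.link hc⟩
  · rintro ⟨h0, h1, h2, h3⟩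
    have key : ∀ c ∈ chainsSet T, ∀ c' ∈ chainsSet T, Collide c c' → c = c' := by
      rintro ⟨x, m, y⟩ hc ⟨x', m', y'⟩ hc' hcol
      have hc : IsChain T x m y := hc
      have hc' : IsChain T x' m' y' := hc'
      obtain ⟨e1, e2, e3⟩ := h0 _ _ _ _ _ _ hc.link hc'.link
        (by unfold Collide at hcol; tauto)
      obtain ⟨rfl, rfl⟩ := hc.ext hc' e1 e2 e3
      rw [e2]
    refine ⟨fun c hc c' hc' hne hcol => hne (key c hc c' hc' hcol), ?_, ?_, ?_⟩
    · intro a ha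
      obtain ⟨m, b, h⟩ := h1 a ha
      obtain ⟨r, s, hC⟩ := h.exists_chain
      exact ⟨((a, r), m, (b, s)), ⟨hC, rfl⟩,
        fun c hc => key _ hc.1 _ hC (Or.inr (Or.inl hc.2))⟩
    · intro m hm
      obtain ⟨a, b, h⟩ := h2 m hm
      obtain ⟨r, s, hC⟩ := h.exists_chain
      exact ⟨((a, r), m, (b, s)), ⟨hC, rfl⟩, fun c hc => key _ hc.1 _ hC (Or.inl hc.2)⟩
    · intro b hb
      obtain ⟨a, m, h⟩ := h3 b hb
      obtain ⟨r, s, hC⟩ := h.exists_chain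
      exact ⟨((a, r), m, (b, s)), ⟨hC, rfl⟩,
        fun c hc => key _ hc.1 _ hC (Or.inr (Or.inr hc.2))⟩

/-- For a canonical triple, the choice in `suppFun` is forced. -/
theorem suppFun_eq_some {n : ℕ} {T : T3 n} (hT : Canonical T) (u v : TW n) :
    suppFun T u = some v ↔ ∃ m, IsChain T u m v := by
  have key : ∀ v v' m m', IsChain T u m v → IsChain T u m' v' → v = v' := by
    intro v v' m m' h h'
    obtain ⟨-, e2, e3⟩ := ((canonical_iff T).1 hT).1 _ _ _ _ _ _ h.link h'.link (Or.inl rfl)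
    exact (h.ext h' rfl e2 e3).2
  unfold suppFun
  split_ifs with h
  · obtain ⟨m, hm⟩ := h.choose_spec
    constructor
    · intro e
      rw [← Option.some.inj e]
      exact ⟨m, hm⟩
    · rintro ⟨m', hm'⟩
      rw [key _ _ _ _ hm hm']
  · simp only [false_iff]
    exact fun h' => h ⟨v, h'⟩

theorem suppFun_eq_none {n : ℕ} (T : T3 n) (u : TW n) :
    suppFun T u = none ↔ ¬ ∃ v m, IsChain T u m v := by
  unfold suppFun
  split_ifs with h <;> simp [h]

theorem mem_piDom {n : ℕ} {T : T3 n} {x : TW n} (hx : x ∈ piDom (suppFun T)) :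
    ∃ y m, IsChain T x m y := by
  by_contra h
  exact hx ((suppFun_eq_none T x).2 h)

theorem mem_piIm {n : ℕ} {T : T3 n} (hT : Canonical T) {y : TW n}
    (hy : y ∈ piIm (suppFun T)) : ∃ x m, IsChain T x m y := by
  obtain ⟨x, hx⟩ := hy
  exact ⟨x, (suppFun_eq_some hT x y).1 hx⟩

/-- The support of a canonical triple is allowable. -/
theorem allowable_suppFun {n : ℕ} {T : T3 n} (hT : Canonical T) : AllowableI (suppFun T) := by
  obtain ⟨h0, -, -, -⟩ := (canonical_iff T).1 hT
  refine ⟨?_, ?_, ?_, ?_⟩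
  · intro x x' y hx hx'
    obtain ⟨m, hm⟩ := (suppFun_eq_some hT _ _).1 hx
    obtain ⟨m', hm'⟩ := (suppFun_eq_some hT _ _).1 hx'
    obtain ⟨e1, e2, -⟩ := h0 _ _ _ _ _ _ hm.link hm'.link (by simp)
    exact (hm.ext hm' e1 e2 rfl).1
  · intro x x' hx hx' hne e
    obtain ⟨y, m, hm⟩ := mem_piDom hx
    obtain ⟨y', m', hm'⟩ := mem_piDom hx'
    obtain ⟨e1, e2, e3⟩ := h0 _ _ _ _ _ _ hm.link hm'.link (Or.inl e)
    exact hne (hm.ext hm' e1 e2 e3).1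
  · intro y y' hy hy' hne e
    obtain ⟨x, m, hm⟩ := mem_piIm hT hy
    obtain ⟨x', m', hm'⟩ := mem_piIm hT hy'
    obtain ⟨e1, e2, e3⟩ := h0 _ _ _ _ _ _ hm.link hm'.link (Or.inr (Or.inr e))
    exact hne (hm.ext hm' e1 e2 e3).2
  · intro x y x' y' hxy hx' hy' hne e
    obtain ⟨y₁, m₁, hm₁⟩ := mem_piDom hx'
    obtain ⟨x₂, m₂, hm₂⟩ := mem_piIm hT hy'
    obtain ⟨m, hm⟩ := (suppFun_eq_some hT _ _).1 hxy
    -- The collision makes `(x'_L, m, y'_L)` a second link through `m`.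
    have hl : Link T x'.1 m y'.1 := ⟨hm₁.link.1, hm₂.link.2.1, by rw [← e]; exact hm.link.2.2⟩
    obtain ⟨e1, -, e3⟩ := h0 _ _ _ _ _ _ hm.link hl (by simp)
    obtain ⟨f1, f2, f3⟩ := h0 _ _ _ _ _ _ hm.link hm₁.link (Or.inl e1)
    obtain ⟨g1, g2, g3⟩ := h0 _ _ _ _ _ _ hm.link hm₂.link (Or.inr (Or.inr e3))
    exact hne (by rw [(hm.ext hm₁ f1 f2 f3).1, (hm.ext hm₂ g1 g2 g3).2])

/-- What a three-extension adds, in terms of databases: new points `l`, `m`, `c`, with the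
conditions on XORs that forbid any new link other than `(l, m, c)`. -/
theorem ThreeExt.data {n : ℕ} {D' E : T3 n} (h : ThreeExt D' E) :
    ∃ l z m c z' : W n,
      D'.1 l = none ∧ D'.2.1 m = none ∧ D'.2.2 c = none ∧
      (∀ a b, D'.1 a ≠ none → D'.2.2 b ≠ none → l ^^^ c ≠ a ^^^ b) ∧
      (∀ m₁, D'.2.1 m₁ ≠ some (l ^^^ c)) ∧
      (∀ m₁ b, D'.2.2 b ≠ none → D'.2.1 m₁ ≠ some (l ^^^ b)) ∧
      (∀ m₁ a, D'.1 a ≠ none → D'.2.1 m₁ ≠ some (a ^^^ c)) ∧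
      E = (Function.update D'.1 l (some z), Function.update D'.2.1 m (some (l ^^^ c)),
        Function.update D'.2.2 c (some z')) := by
  obtain ⟨l, z, m, w, z', E2, ⟨E1, ⟨hD, -, hl, rfl⟩, hm, ⟨v, hv, hvc⟩, rfl⟩, rfl⟩ := h
  obtain ⟨p1, -, p3, p4⟩ := hv
  obtain ⟨h0, h1, h2, h3⟩ := (canonical_iff D').1 hD
  set A := suppFun D' with hA
  set I := Function.update A (l, (0 : W n)) (some v) with hI
  have Il : I (l, 0) = some v := by simp [hI]
  have Ine : ∀ x y, A x = some y → I x = some y := by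
    intro x y hx
    rw [hI, Function.update_of_ne _ _ _, hx]
    rintro rfl
    rw [hl] at hx
    cases hx
  have hln : D'.1 l = none := by
    by_contra hne
    obtain ⟨m₁, b, hL⟩ := h1 l hne
    obtain ⟨r, s, hC⟩ := hL.exists_chain
    exact (suppFun_eq_none D' _).1 (hl r) ⟨_, _, hC⟩
  -- Every point of the domains of `D'` lies on a chain, so is seen by the extended function.
  have domI : ∀ a, D'.1 a ≠ none → ∃ x y, I x = some y ∧ x.1 = a ∧ A x = some y := by
    intro a ha
    obtain ⟨m₁, b, hL⟩ := h1 a ha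
    obtain ⟨r, s, hC⟩ := hL.exists_chain
    have := (suppFun_eq_some hD _ _).2 ⟨_, hC⟩
    exact ⟨_, _, Ine _ _ this, rfl, this⟩
  have imI : ∀ b, D'.2.2 b ≠ none → ∃ x y, I x = some y ∧ y.1 = b ∧ A x = some y := by
    intro b hb
    obtain ⟨a, m₁, hL⟩ := h3 b hb
    obtain ⟨r, s, hC⟩ := hL.exists_chain
    have := (suppFun_eq_some hD _ _).2 ⟨_, hC⟩
    exact ⟨_, _, Ine _ _ this, rfl, this⟩
  have linkI : ∀ m₁ d, D'.2.1 m₁ = some d →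
      ∃ x y, I x = some y ∧ x.1 ^^^ y.1 = d ∧ A x = some y := by
    intro m₁ d hd
    obtain ⟨a, b, hL⟩ := h2 m₁ (by simp [hd])
    obtain ⟨r, s, hC⟩ := hL.exists_chain
    have := (suppFun_eq_some hD _ _).2 ⟨_, hC⟩
    refine ⟨_, _, Ine _ _ this, ?_, this⟩
    have := hL.2.2
    rw [hd] at this
    exact (Option.some.inj this).symm
  have notl : ∀ x y, A x = some y → x ≠ (l, 0) := by
    rintro x y hx rfl
    rw [hl] at hx
    cases hx
  have hvnew : ∀ x y, A x = some y → y ≠ v := by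
    rintro x y hx rfl
    exact notl _ _ hx (p1 _ _ _ (Ine _ _ hx) Il)
  have domMem : ∀ x y, I x = some y → x ∈ piDom I := fun x y h => by simp [piDom, h]
  have imMem : ∀ x y, I x = some y → y ∈ piIm I := fun x y h => ⟨x, h⟩
  refine ⟨l, z, m, v.1, z', hln, hm, ?_, ?_, ?_, ?_, ?_, ?_⟩
  · by_contra hne
    obtain ⟨x, y, hxy, e, hA'⟩ := imI _ hne
    exact p3 y v (imMem _ _ hxy) (imMem _ _ Il) (hvnew _ _ hA') e
  · intro a b ha hb
    obtain ⟨x, y, hxy, rfl, hAx⟩ := domI a ha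
    obtain ⟨x', y', hxy', rfl, hAx'⟩ := imI b hb
    refine p4 _ _ _ _ Il (domMem _ _ hxy) (imMem _ _ hxy') ?_
    intro e
    exact notl _ _ hAx (Prod.ext_iff.1 e).1.symm
  · intro m₁ hd
    obtain ⟨x, y, hxy, e, hAx⟩ := linkI _ _ hd
    refine p4 _ _ _ _ hxy (domMem _ _ Il) (imMem _ _ Il) ?_ e
    intro e'
    exact notl _ _ hAx (Prod.ext_iff.1 e').1
  · intro m₁ b hb hd
    obtain ⟨x, y, hxy, e, hAx⟩ := linkI _ _ hd
    obtain ⟨x', y', hxy', rfl, hAx'⟩ := imI b hb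
    refine p4 _ _ _ _ hxy (domMem _ _ Il) (imMem _ _ hxy') ?_ e
    intro e'
    exact notl _ _ hAx (Prod.ext_iff.1 e').1
  · intro m₁ a ha hd
    obtain ⟨x, y, hxy, e, hAx⟩ := linkI _ _ hd
    obtain ⟨x', y', hxy', rfl, hAx'⟩ := domI a ha
    refine p4 _ _ _ _ hxy (domMem _ _ hxy') (imMem _ _ Il) ?_ e
    intro e'
    exact hvnew _ _ hAx (Prod.ext_iff.1 e').2
  · simp only [hvc, xor_cancel]

theorem ThreeExt.canonical {n : ℕ} {D' E : T3 n} (hD : Canonical D') (h : ThreeExt D' E) :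
    Canonical E := by
  obtain ⟨l, z, m, c, z', hl, hm, hc, i1, i2, i3, i4, rfl⟩ := h.data
  obtain ⟨h0, h1, h2, h3⟩ := (canonical_iff D').1 hD
  have links : ∀ a m₁ b,
      Link (Function.update D'.1 l (some z), Function.update D'.2.1 m (some (l ^^^ c)),
        Function.update D'.2.2 c (some z')) a m₁ b ↔
      (a = l ∧ m₁ = m ∧ b = c) ∨ Link D' a m₁ b := by
    intro a m₁ b
    constructor
    · rintro ⟨q1, q2, q3⟩
      simp only [Function.update_apply] at q1 q2 q3
      by_cases em : m₁ = m
      · rw [if_pos em] at q3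
        have q3 := Option.some.inj q3
        by_cases ea : a = l
        · subst ea
          exact Or.inl ⟨rfl, em, (xor_inj q3).symm⟩
        · by_cases eb : b = c
          · subst eb
            exact absurd (xor_inj' q3).symm ea
          · rw [if_neg ea] at q1
            rw [if_neg eb] at q2
            exact absurd q3 (i1 _ _ q1 q2)
      · rw [if_neg em] at q3
        by_cases ea : a = l
        · by_cases eb : b = c
          · subst ea eb; exact absurd q3 (i2 _)
          · rw [if_neg eb] at q2
            subst ea; exact absurd q3 (i3 _ _ q2)
        · rw [if_neg ea] at q1
          by_cases eb : b = c
          · subst eb; exact absurd q3 (i4 _ _ q1)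
          · rw [if_neg eb] at q2
            exact Or.inr ⟨q1, q2, q3⟩
    · rintro (⟨rfl, rfl, rfl⟩ | ⟨q1, q2, q3⟩)
      · simp [Link]
      · have ea : a ≠ l := by rintro rfl; exact q1 hl
        have eb : b ≠ c := by rintro rfl; exact q2 hc
        have em : m₁ ≠ m := by rintro rfl; simp [hm] at q3
        simp [Link, ea, eb, em, q1, q2, q3]
  rw [canonical_iff]
  simp only [links]
  have n1 : ∀ m₁ b, ¬ Link D' l m₁ b := fun _ _ q => q.1 hl
  have n2 : ∀ a b, ¬ Link D' a m b := fun _ _ q => by simpa [hm] using q.2.2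
  have n3 : ∀ a m₁, ¬ Link D' a m₁ c := fun _ _ q => q.2.1 hc
  refine ⟨?_, ?_, ?_, ?_⟩
  · rintro a m₁ b a' m₁' b' (⟨rfl, rfl, rfl⟩ | q) (⟨rfl, rfl, rfl⟩ | q') he
    · simp
    · rcases he with rfl | rfl | rfl
      · exact absurd q' (n1 _ _)
      · exact absurd q' (n2 _ _)
      · exact absurd q' (n3 _ _)
    · rcases he with rfl | rfl | rfl
      · exact absurd q (n1 _ _)
      · exact absurd q (n2 _ _)
      · exact absurd q (n3 _ _)
    · exact h0 _ _ _ _ _ _ q q' he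
  · intro a ha
    by_cases ea : a = l
    · exact ⟨m, c, Or.inl ⟨ea, rfl, rfl⟩⟩
    · simp only [Function.update_of_ne ea] at ha
      obtain ⟨m₁, b, q⟩ := h1 a ha
      exact ⟨m₁, b, Or.inr q⟩
  · intro a ha
    by_cases ea : a = m
    · exact ⟨l, c, Or.inl ⟨rfl, ea, rfl⟩⟩
    · simp only [Function.update_of_ne ea] at ha
      obtain ⟨m₁, b, q⟩ := h2 a ha
      exact ⟨m₁, b, Or.inr q⟩
  · intro a ha
    by_cases ea : a = c
    · exact ⟨l, m, Or.inl ⟨rfl, rfl, ea⟩⟩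
    · simp only [Function.update_of_ne ea] at ha
      obtain ⟨m₁, b, q⟩ := h3 a ha
      exact ⟨m₁, b, Or.inr q⟩

/-- The triple with the entries at `a`, `m`, `b` deleted. -/
def del {n : ℕ} (D : T3 n) (a m b : W n) : T3 n :=
  (Function.update D.1 a none, Function.update D.2.1 m none, Function.update D.2.2 b none)

theorem isChain_del {n : ℕ} (D : T3 n) (a m b : W n) (x : TW n) (m₁ : W n) (y : TW n) :
    IsChain (del D a m b) x m₁ y ↔ IsChain D x m₁ y ∧ x.1 ≠ a ∧ m₁ ≠ m ∧ y.1 ≠ b := by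
  simp only [IsChain, del, Function.update_apply]
  split_ifs <;> simp_all

theorem link_del {n : ℕ} (D : T3 n) (a m b a₁ m₁ b₁ : W n) :
    Link (del D a m b) a₁ m₁ b₁ ↔ Link D a₁ m₁ b₁ ∧ a₁ ≠ a ∧ m₁ ≠ m ∧ b₁ ≠ b := by
  simp only [Link, del, Function.update_apply]
  split_ifs <;> simp_all

theorem canonical_del {n : ℕ} {D : T3 n} (hD : Canonical D) {a m b : W n}
    (hL : Link D a m b) : Canonical (del D a m b) := by
  obtain ⟨h0, h1, h2, h3⟩ := (canonical_iff D).1 hD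
  rw [canonical_iff]
  simp only [link_del]
  refine ⟨fun _ _ _ _ _ _ q q' he => h0 _ _ _ _ _ _ q.1 q'.1 he, ?_, ?_, ?_⟩
  · intro x hx
    have hne : x ≠ a := by rintro rfl; simp [del] at hx
    simp only [del, Function.update_of_ne hne] at hx
    obtain ⟨m₁, b₁, q⟩ := h1 x hx
    have := h0 _ _ _ _ _ _ q hL
    exact ⟨m₁, b₁, q, by tauto⟩
  · intro x hx
    have hne : x ≠ m := by rintro rfl; simp [del] at hx
    simp only [del, Function.update_of_ne hne] at hx
    obtain ⟨m₁, b₁, q⟩ := h2 x hx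
    have := h0 _ _ _ _ _ _ q hL
    exact ⟨m₁, b₁, q, by tauto⟩
  · intro x hx
    have hne : x ≠ b := by rintro rfl; simp [del] at hx
    simp only [del, Function.update_of_ne hne] at hx
    obtain ⟨m₁, b₁, q⟩ := h3 x hx
    have := h0 _ _ _ _ _ _ q hL
    exact ⟨m₁, b₁, q, by tauto⟩

theorem dbSize_update_none {n : ℕ} {d : DB n} {a : W n} (ha : d a ≠ none) {t : ℕ}
    (ht : dbSize d = t + 1) : dbSize (Function.update d a none) = t := by
  have e : dbDom (Function.update d a none) = dbDom d \ {a} := by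
    ext x
    by_cases hx : x = a
    · simp [dbDom, hx]
    · simp [dbDom, hx]
  unfold dbSize at *
  rw [e, Set.ncard_sdiff_singleton_of_mem (show a ∈ dbDom d from ha), ht]
  simp

/-- Putting the image `v` at a point `u` of an allowable function with the same left half as `x`
instead of at `x` keeps it allowable: allowability only sees left halves. -/
theorem allowable_update_left {n : ℕ} {A : PF n} {x u v : TW n} (hxu : x.1 = u.1)
    (hx : A x = none) (hu : A u = none)
    (h : AllowableI (Function.update A u (some v))) :
    AllowableI (Function.update A x (some v)) := by
  -- Transport along the swap of `x` and `u`, which preserves left halves.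
  let σ : Equiv.Perm (TW n) := Equiv.swap x u
  have e : ∀ p, Function.update A x (some v) p = Function.update A u (some v) (σ p) := by
    intro p
    by_cases h1 : p = x
    · subst h1; simp [σ]
    · by_cases h2 : p = u
      · subst h2
        by_cases h3 : x = p
        · exact absurd h3.symm h1
        · simp [σ, Function.update_of_ne h1, Function.update_of_ne h3, hx, hu]
      · simp [σ, Equiv.swap_apply_of_ne_of_ne h1 h2, Function.update_of_ne h1,
          Function.update_of_ne h2]
  have σl : ∀ p, (σ p).1 = p.1 := by
    intro p
    by_cases h1 : p = x
    · subst h1; simp [σ, hxu]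
    · by_cases h2 : p = u
      · subst h2; simp [σ, hxu]
      · simp [σ, Equiv.swap_apply_of_ne_of_ne h1 h2]
  have dm : ∀ p, p ∈ piDom (Function.update A x (some v)) →
      σ p ∈ piDom (Function.update A u (some v)) := by
    intro p hp
    simpa [piDom, e] using hp
  have im : ∀ q, q ∈ piIm (Function.update A x (some v)) →
      q ∈ piIm (Function.update A u (some v)) := by
    rintro q ⟨p, hp⟩
    exact ⟨σ p, by rw [← e, hp]⟩
  obtain ⟨p1, p2, p3, p4⟩ := h
  refine ⟨?_, ?_, ?_, ?_⟩
  · intro p p' y hp hp'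
    rw [e] at hp hp'
    exact σ.injective (p1 _ _ _ hp hp')
  · intro p p' hp hp' hne
    have := p2 _ _ (dm p hp) (dm p' hp') (σ.injective.ne hne)
    rwa [σl, σl] at this
  · intro y y' hy hy' hne
    exact p3 y y' (im y hy) (im y' hy') hne
  · intro p y p' y' hp hp' hy' hne
    rw [e] at hp
    have := p4 _ _ _ _ hp (dm p' hp') (im y' hy') (by
      intro he
      simp only [Prod.mk.injEq, EmbeddingLike.apply_eq_iff_eq] at he
      exact hne (by rw [he.1, he.2]))
    rwa [σl, σl] at this

/-- A canonical triple is a three-extension of the triple obtained by deleting a chain. -/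
theorem threeExt_del {n : ℕ} {D : T3 n} (hD : Canonical D) {u v : TW n} {m : W n}
    (hC : IsChain D u m v) : ThreeExt (del D u.1 m v.1) D := by
  have hD' := canonical_del hD hC.link
  obtain ⟨h0, -, -, -⟩ := (canonical_iff D).1 hD
  have hn : ∀ r, suppFun (del D u.1 m v.1) (u.1, r) = none := by
    intro r
    rw [suppFun_eq_none]
    rintro ⟨y, m₁, hc⟩
    exact ((isChain_del ..).1 hc).2.1 rfl
  have hS : Function.update (suppFun (del D u.1 m v.1)) u (some v) = suppFun D := by
    funext x
    by_cases hx : x = u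
    · subst hx
      rw [Function.update_self, (suppFun_eq_some hD _ _).2 ⟨m, hC⟩]
    · rw [Function.update_of_ne hx]
      ext y
      simp only [suppFun_eq_some hD, suppFun_eq_some hD', isChain_del]
      refine exists_congr fun m₁ => ⟨fun q => q.1, fun q => ⟨q, ?_⟩⟩
      -- A chain meeting the deleted one equals it, so would start at `u`.
      have := h0 _ _ _ _ _ _ q.link hC.link
      by_contra hcon
      obtain ⟨e1, e2, e3⟩ := this (by tauto)
      exact hx (q.ext hC e1 e2 e3).1
  have hA := allowable_suppFun hD
  rw [← hS] at hA
  refine ⟨u.1, m ^^^ u.2, m, u.1 ^^^ v.1, m ^^^ v.2, _,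
    ⟨_, ⟨hD', ⟨u.2, v, hA⟩, hn, rfl⟩, by simp [del], ?_, rfl⟩, ?_⟩
  · rw [xor_cancel]
    exact ⟨v, allowable_update_left (x := (u.1, 0)) (u := u) rfl (hn 0) (hn u.2) hA, rfl⟩
  · obtain ⟨c1, c2, c3⟩ := hC
    simp only [del, xor_cancel, Function.update_idem, ← c1, ← c2, ← c3, Function.update_eq_self]

/-- A parent of `D` with no chain from `u` is `D` with the chain from `u` deleted. -/
theorem eq_del_of_threeExt {n : ℕ} {D D' : T3 n} (hD : Canonical D) (hD' : Canonical D')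
    {u v : TW n} {m : W n} (hC : IsChain D u m v) (hu : ¬ ∃ v m, IsChain D' u m v)
    (h : ThreeExt D' D) : D' = del D u.1 m v.1 := by
  obtain ⟨l, z, m₀, c, z', hl, hm, hc, -, -, -, -, rfl⟩ := h.data
  obtain ⟨h0, -, -, -⟩ := (canonical_iff _).1 hD
  obtain ⟨-, h1, h2, h3⟩ := (canonical_iff D').1 hD'
  have up : ∀ x m₁ y, IsChain D' x m₁ y → IsChain
      (Function.update D'.1 l (some z), Function.update D'.2.1 m₀ (some (l ^^^ c)),
        Function.update D'.2.2 c (some z')) x m₁ y := by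
    rintro x m₁ y ⟨q1, q2, q3⟩
    have ea : x.1 ≠ l := by intro e; rw [e, hl] at q1; cases q1
    have eb : y.1 ≠ c := by intro e; rw [e, hc] at q2; cases q2
    have em : m₁ ≠ m₀ := by intro e; rw [e, hm] at q3; cases q3
    simp [IsChain, Function.update_of_ne ea, Function.update_of_ne eb, Function.update_of_ne em,
      q1, q2, q3]
  -- No link of `D'` meets the chain `(u, m, v)`.
  have no : ∀ a m₁ b, Link D' a m₁ b → ¬ (a = u.1 ∨ m₁ = m ∨ b = v.1) := by
    intro a m₁ b q he
    obtain ⟨r, s, hq⟩ := q.exists_chain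
    have hq' := up _ _ _ hq
    obtain ⟨e1, e2, e3⟩ := h0 _ _ _ _ _ _ hq'.link hC.link he
    have := (hq'.ext hC e1 e2 e3).1
    rw [this] at hq
    exact hu ⟨_, _, hq⟩
  have L := hC.link
  have eu : u.1 = l := by
    by_contra hne
    have := L.1
    simp only [Function.update_of_ne hne] at this
    obtain ⟨m₁, b, q⟩ := h1 _ this
    exact no _ _ _ q (Or.inl rfl)
  have em : m = m₀ := by
    by_contra hne
    have := L.2.2
    simp only [Function.update_of_ne hne] at this
    obtain ⟨a, b, q⟩ := h2 m (by simp [this])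
    exact no _ _ _ q (Or.inr (Or.inl rfl))
  have ev : v.1 = c := by
    by_contra hne
    have := L.2.1
    simp only [Function.update_of_ne hne] at this
    obtain ⟨a, m₁, q⟩ := h3 _ this
    exact no _ _ _ q (Or.inr (Or.inr rfl))
  rw [eu, em, ev]
  simp only [del, Function.update_idem]
  rw [Function.update_eq_self_iff.2 hl.symm, Function.update_eq_self_iff.2 hm.symm,
    Function.update_eq_self_iff.2 hc.symm]

/-- Every size-`t+1` canonical triple defined on `u` is the
three-extension of a unique size-`t` canonical triple not defined on `u`;
moreover three-extensions of canonical triples are canonical. -/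
theorem threeExt_unique_parent {n : ℕ} (hn : 1 ≤ n) (u : TW n) (t : ℕ)
    (D : T3 n) (hD : Canonical D)
    (hh : dbSize D.1 = t + 1) (hk : dbSize D.2.1 = t + 1) (hf : dbSize D.2.2 = t + 1)
    (hu : ∃ v m, IsChain D u m v) :
    (∃! D' : T3 n, Canonical D' ∧ (¬ ∃ v m, IsChain D' u m v) ∧
      dbSize D'.1 = t ∧ dbSize D'.2.1 = t ∧ dbSize D'.2.2 = t ∧ ThreeExt D' D) ∧
    (∀ D' E : T3 n, Canonical D' → ThreeExt D' E → Canonical E) := by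
  refine ⟨?_, fun D' E h h' => h'.canonical h⟩
  obtain ⟨v, m, hC⟩ := hu
  have L := hC.link
  refine ⟨del D u.1 m v.1, ⟨canonical_del hD L, ?_, dbSize_update_none L.1 hh,
    dbSize_update_none (by simp [L.2.2]) hk, dbSize_update_none L.2.1 hf, threeExt_del hD hC⟩, ?_⟩
  · rintro ⟨y, m₁, hc⟩
    exact ((isChain_del ..).1 hc).2.1 rfl
  · rintro D' ⟨hD', hu', -, -, -, hT⟩
    exact eq_del_of_threeExt hD hD' hC hu' hT

end CPO
end

section
/- Let D ≠ D' be two canonical triples and let u ∈ {0,1}^{2n} be allowed by both Supp(D) and Supp(D') but supported by neither (u ∉ Dom(Supp(D)) ∪ Dom(Supp(D'))). Then the extension sets are disjoint: D↑^u_h ∩ D'↑^u_h = ∅, D↑^u_{h,k} ∩ D'↑^u_{h,k} = ∅, and D↑^u_{h,k,f} ∩ D'↑^u_{h,k,f} = ∅. -/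
namespace CPO

/-- `D↑^u_h`. -/
def upH {n : ℕ} (D : T3 n) (u : TW n) : Set (T3 n) :=
  {D} ∪ {E | ∃ z : W n, D.2.1 (u.2 ^^^ z) = none ∧
    E = (Function.update D.1 u.1 (some z), D.2.1, D.2.2)}

/-- `D↑^u_{h,k}` (the union of `D'↑^u_k` over `D' ∈ D↑^u_h`). -/
def upHK {n : ℕ} (D : T3 n) (u : TW n) : Set (T3 n) :=
  upH D u ∪ {E | ∃ z w : W n, D.2.1 (u.2 ^^^ z) = none ∧
    (u.1 ^^^ w) ∈ Lset (suppFun D) u ∧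
    E = (Function.update D.1 u.1 (some z),
         Function.update D.2.1 (u.2 ^^^ z) (some w), D.2.2)}

/-- `D↑^u_{h,k,f}`. -/
def upHKF {n : ℕ} (D : T3 n) (u : TW n) : Set (T3 n) :=
  upHK D u ∪ {E | ∃ z w z' : W n, D.2.1 (u.2 ^^^ z) = none ∧
    (u.1 ^^^ w) ∈ Lset (suppFun D) u ∧
    E = (Function.update D.1 u.1 (some z),
         Function.update D.2.1 (u.2 ^^^ z) (some w),
         Function.update D.2.2 (u.1 ^^^ w) (some z'))}

end CPO
namespace CPO

/-- A chain starting at `u` determines its end, so the choice in `suppFun` is immaterial. -/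
lemma suppFun_eq_of_isChain {n : ℕ} {T : T3 n} {u v : TW n} {m : W n} (h : IsChain T u m v) :
    suppFun T u = some v := by
  have hex : ∃ v, ∃ m, IsChain T u m v := ⟨v, m, h⟩
  rw [suppFun, dif_pos hex]
  obtain ⟨m', h1, h2, h3⟩ := hex.choose_spec
  obtain ⟨g1, g2, g3⟩ := h
  rw [g1] at h1
  have hm : m = m' := BitVec.xor_left_inj u.2 |>.mp (Option.some.inj h1)
  subst hm
  rw [g3] at h3
  have hv : v.1 = hex.choose.1 := BitVec.xor_right_inj u.1 |>.mp (Option.some.inj h3)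
  rw [← hv, g2] at h2
  have hv2 : v.2 = hex.choose.2 := BitVec.xor_right_inj m |>.mp (Option.some.inj h2)
  exact congrArg some (Prod.ext hv hv2).symm

lemma h_fresh {n : ℕ} {D : T3 n} (hD : Canonical D) {u : TW n}
    (ha : Allows (suppFun D) u) (hu : ¬ ∃ v m, IsChain D u m v) : D.1 u.1 = none := by
  by_contra hne
  obtain ⟨⟨x, m, v⟩, ⟨hc, hx⟩, -⟩ := hD.2.1 u.1 hne
  change IsChain D x m v at hc
  have hxu : x ≠ u := by
    rintro rfl
    exact hu ⟨v, m, hc⟩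
  obtain ⟨v', -, hin, -⟩ := ha
  refine hin x u ?_ ?_ hxu hx
  · simp [piDom, Function.update_of_ne hxu, suppFun_eq_of_isChain hc]
  · simp [piDom]

lemma f_fresh {n : ℕ} {D : T3 n} (hD : Canonical D) {u : TW n}
    (hu : ¬ ∃ v m, IsChain D u m v) {l : W n} (hl : l ∈ Lset (suppFun D) u) :
    D.2.2 l = none := by
  by_contra hne
  obtain ⟨⟨x, m, v⟩, ⟨hc, hv⟩, -⟩ := hD.2.2.2 l hne
  change IsChain D x m v at hc
  have hxu : x ≠ u := by
    rintro rfl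
    exact hu ⟨v, m, hc⟩
  obtain ⟨v', ⟨hinj, -, hout, -⟩, hv'⟩ := hl
  have hx : Function.update (suppFun D) u (some v') x = some v := by
    rw [Function.update_of_ne hxu, suppFun_eq_of_isChain hc]
  have hu' : Function.update (suppFun D) u (some v') u = some v' := Function.update_self ..
  by_cases hvv : v = v'
  · subst hvv
    exact hxu (hinj x u v hx hu')
  · exact hout v v' ⟨x, hx⟩ ⟨u, hu'⟩ hvv (hv.trans hv'.symm)

/-- The triple obtained from `E` by erasing the entries that are visited when a chain starting at
`u` is followed: the entry of `E_h` at `u.1`, with value `z`, then that of `E_k` at `u.2 ^^^ z`,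
with value `w`, then that of `E_f` at `u.1 ^^^ w`, stopping at the first undefined one. -/
def erase {n : ℕ} (u : TW n) (E : T3 n) : T3 n :=
  match E.1 u.1 with
  | none => E
  | some z => match E.2.1 (u.2 ^^^ z) with
    | none => (Function.update E.1 u.1 none, E.2.1, E.2.2)
    | some w => (Function.update E.1 u.1 none, Function.update E.2.1 (u.2 ^^^ z) none,
        Function.update E.2.2 (u.1 ^^^ w) none)

lemma update_none_of_eq_none {n : ℕ} {f : DB n} {a : W n} (h : f a = none) :
    Function.update f a none = f := by
  rw [← h, Function.update_eq_self]

lemma erase_eq {n : ℕ} {D : T3 n} (hD : Canonical D) {u : TW n}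
    (ha : Allows (suppFun D) u) (hu : ¬ ∃ v m, IsChain D u m v) {E : T3 n}
    (hE : E ∈ upHKF D u) : erase u E = D := by
  have h0 := h_fresh hD ha hu
  rcases hE with ((rfl | ⟨z, hz, rfl⟩) | ⟨z, w, hz, hw, rfl⟩) | ⟨z, w, z', hz, hw, rfl⟩
  · simp [erase, h0]
  · simp [erase, hz, update_none_of_eq_none h0]
  · simp [erase, update_none_of_eq_none h0, update_none_of_eq_none hz,
      update_none_of_eq_none (f_fresh hD hu hw)]
  · simp [erase, update_none_of_eq_none h0, update_none_of_eq_none hz,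
      update_none_of_eq_none (f_fresh hD hu hw)]

/-- Disjointness of the up-arrow extension sets of two
distinct canonical triples at a commonly allowed, commonly unsupported `u`. -/
theorem upArrow_disjoint {n : ℕ} (hn : 1 ≤ n) (D D' : T3 n)
    (hD : Canonical D) (hD' : Canonical D') (hne : D ≠ D') (u : TW n)
    (ha : Allows (suppFun D) u) (ha' : Allows (suppFun D') u)
    (hu : ¬ ∃ v m, IsChain D u m v) (hu' : ¬ ∃ v m, IsChain D' u m v) :
    upH D u ∩ upH D' u = ∅ ∧
    upHK D u ∩ upHK D' u = ∅ ∧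
    upHKF D u ∩ upHKF D' u = ∅ := by
  have key : ∀ E, E ∈ upHKF D u → E ∈ upHKF D' u → False := fun E h h' =>
    hne ((erase_eq hD ha hu h).symm.trans (erase_eq hD' ha' hu' h'))
  refine ⟨?_, ?_, ?_⟩ <;> refine Set.eq_empty_of_forall_notMem fun E hE => key E ?_ ?_
  · exact Or.inl (Or.inl hE.1)
  · exact Or.inl (Or.inl hE.2)
  · exact Or.inl hE.1
  · exact Or.inl hE.2
  · exact hE.1
  · exact hE.2

end CPO
end

section
/- Let D ≠ D' be two canonical triples and u ∈ Dom(Supp(D)) ∩ Dom(Supp(D')). Then D↓^u_h ∩ D'↓^u_h = ∅ and D↓^u_k ∩ D'↓^u_k = ∅. If additionally D[u→⊥] ≠ D'[u→⊥] (the triples obtained by removing the chain beginning at u differ), then also D↓^u_f ∩ D'↓^u_f = ∅. -/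
namespace CPO

/-- `D↓^u_h`. -/
def downH {n : ℕ} (D : T3 n) (u : TW n) : Set (T3 n) :=
  {E | ∃ z : Option (W n), (∀ c, z = some c → D.2.1 (u.2 ^^^ c) = none) ∧
    E = (Function.update D.1 u.1 z, D.2.1, D.2.2)}

/-- `D↓^u_k`. -/
def downK {n : ℕ} (D : T3 n) (u : TW n) : Set (T3 n) :=
  {E | ∃ zh : W n, D.1 u.1 = some zh ∧ ∃ w : Option (W n),
    (∀ c, w = some c → (u.1 ^^^ c) ∈ Lset (suppFun (removeChain D u)) u) ∧
    E = (D.1, Function.update D.2.1 (u.2 ^^^ zh) w, D.2.2)}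

/-- `D↓^u_f`. -/
def downF {n : ℕ} (D : T3 n) (u : TW n) : Set (T3 n) :=
  {E | ∃ v m, IsChain D u m v ∧ ∃ z : Option (W n),
    E = (D.1, D.2.1, Function.update D.2.2 v.1 z)}

end CPO
namespace CPO

lemma eq_off_of_update_eq {n : ℕ} {f g : DB n} {a : W n} {z z' : Option (W n)}
    (h : Function.update f a z = Function.update g a z') {x : W n} (hx : x ≠ a) : f x = g x := by
  simpa [hx] using congrFun h x

lemma eq_of_eq_off {n : ℕ} {f g : DB n} {a : W n}
    (h : ∀ x, x ≠ a → f x = g x) (ha : f a = g a) : f = g := by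
  funext x
  by_cases hx : x = a
  · rw [hx, ha]
  · exact h x hx

/-- In a canonical triple, colliding chains are equal. -/
lemma Canonical.chain_eq {n : ℕ} {T : T3 n} (hT : Canonical T) {u v x y : TW n} {m p : W n}
    (h : IsChain T u m v) (h' : IsChain T x p y)
    (hc : m = p ∨ u.1 = x.1 ∨ v.1 = y.1) : u = x ∧ m = p ∧ v = y := by
  by_contra hne
  exact hT.1 (u, m, v) h (x, p, y) h' (fun e => hne (by simpa using e)) hc

lemma IsChain.mid_eq {n : ℕ} {T T' : T3 n} {u v v' : TW n} {m m' : W n}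
    (h : IsChain T u m v) (h' : IsChain T' u m' v') (e : T.1 u.1 = T'.1 u.1) : m = m' := by
  rw [h.1, h'.1] at e
  exact (BitVec.xor_left_inj _).mp (Option.some.inj e)

lemma IsChain.left_eq {n : ℕ} {T T' : T3 n} {u v v' : TW n} {m : W n}
    (h : IsChain T u m v) (h' : IsChain T' u m v') (e : T.2.1 m = T'.2.1 m) : v.1 = v'.1 := by
  rw [h.2.2, h'.2.2] at e
  exact (BitVec.xor_right_inj _).mp (Option.some.inj e)

/-- The chain chosen in the definition of `removeChain` does not matter, since `u` determines
both the middle string and the left half of the endpoint. -/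
lemma IsChain.removeChain_eq {n : ℕ} {T : T3 n} {u v : TW n} {m : W n} (h : IsChain T u m v) :
    removeChain T u = (Function.update T.1 u.1 none,
      Function.update T.2.1 m none, Function.update T.2.2 v.1 none) := by
  have hex : ∃ v, ∃ m, IsChain T u m v := ⟨v, m, h⟩
  have hc : IsChain T u hex.choose_spec.choose hex.choose := hex.choose_spec.choose_spec
  have hm := hc.mid_eq h rfl
  have hv : hex.choose.1 = v.1 := by
    rw [hm] at hc
    exact hc.left_eq h rfl
  rw [removeChain, dif_pos hex, hm, hv]

/-- Canonical triples with a common chain start `u` that differ at most in `h` at `u_L` are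
equal. -/
lemma eq_of_eq_off_h {n : ℕ} {D D' : T3 n} (hD : Canonical D) (hD' : Canonical D')
    {u v v' : TW n} {m m' : W n} (h : IsChain D u m v) (h' : IsChain D' u m' v')
    (eh : ∀ x, x ≠ u.1 → D.1 x = D'.1 x) (ek : D.2.1 = D'.2.1) (ef : D.2.2 = D'.2.2) :
    D = D' := by
  by_cases hm : m = m'
  · exact Prod.ext (eq_of_eq_off eh (by rw [h.1, h'.1, hm])) (Prod.ext ek ef)
  · exfalso
    obtain ⟨⟨x, p, y⟩, ⟨hc, hp⟩, -⟩ := hD.2.2.1 m' (by rw [ek, h'.2.2]; simp)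
    change IsChain D x p y at hc
    change p = m' at hp
    subst hp
    have hx : x.1 ≠ u.1 := fun e => hm (hD.chain_eq h hc (Or.inr (Or.inl e.symm))).2.1
    have hc' : IsChain D' x p y := ⟨eh _ hx ▸ hc.1, ef ▸ hc.2.1, ek ▸ hc.2.2⟩
    exact hx (congrArg Prod.fst (hD'.chain_eq hc' h' (Or.inl rfl)).1)

/-- Canonical triples with a common initial chain segment `u, m` that differ at most in `k` at `m`
are equal. -/
lemma eq_of_eq_off_k {n : ℕ} {D D' : T3 n} (hD : Canonical D) (hD' : Canonical D')
    {u v v' : TW n} {m : W n} (h : IsChain D u m v) (h' : IsChain D' u m v')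
    (eh : D.1 = D'.1) (ek : ∀ x, x ≠ m → D.2.1 x = D'.2.1 x) (ef : D.2.2 = D'.2.2) :
    D = D' := by
  by_cases hv : v.1 = v'.1
  · exact Prod.ext eh (Prod.ext (eq_of_eq_off ek (by rw [h.2.2, h'.2.2, hv])) ef)
  · exfalso
    obtain ⟨⟨x, p, y⟩, ⟨hc, hy⟩, -⟩ := hD.2.2.2 v'.1 (by rw [ef, h'.2.1]; simp)
    change IsChain D x p y at hc
    change y.1 = v'.1 at hy
    have hp : p ≠ m := fun e =>
      hv ((congrArg Prod.fst (hD.chain_eq h hc (Or.inl e.symm)).2.2).trans hy)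
    have hc' : IsChain D' x p y := ⟨eh ▸ hc.1, ef ▸ hc.2.1, ek _ hp ▸ hc.2.2⟩
    exact hp (hD'.chain_eq hc' h' (Or.inr (Or.inr hy))).2.1

/-- Disjointness of the down-arrow sets of two distinct
canonical triples at a commonly supported point `u`. -/
theorem downArrow_disjoint {n : ℕ} (hn : 1 ≤ n) (D D' : T3 n)
    (hD : Canonical D) (hD' : Canonical D') (hne : D ≠ D') (u : TW n)
    (hu : ∃ v m, IsChain D u m v) (hu' : ∃ v m, IsChain D' u m v) :
    downH D u ∩ downH D' u = ∅ ∧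
    downK D u ∩ downK D' u = ∅ ∧
    (removeChain D u ≠ removeChain D' u → downF D u ∩ downF D' u = ∅) := by
  obtain ⟨v, m, h⟩ := hu
  obtain ⟨v', m', h'⟩ := hu'
  refine ⟨?_, ?_, fun hr => ?_⟩
  · refine Set.eq_empty_of_forall_notMem ?_
    rintro E ⟨⟨z, -, rfl⟩, z', -, e⟩
    obtain ⟨eh, ek, ef⟩ : _ ∧ _ ∧ _ := by simpa only [Prod.mk.injEq] using e
    exact hne (eq_of_eq_off_h hD hD' h h' (fun x hx => eq_off_of_update_eq eh hx) ek ef)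
  · refine Set.eq_empty_of_forall_notMem ?_
    rintro E ⟨⟨y, hy, w, -, rfl⟩, y', hy', w', -, e⟩
    obtain ⟨eh, ek, ef⟩ : _ ∧ _ ∧ _ := by simpa only [Prod.mk.injEq] using e
    obtain rfl := h.mid_eq h' (by rw [eh])
    have hm : u.2 ^^^ y = m := by
      obtain rfl := Option.some.inj (hy.symm.trans h.1)
      rw [BitVec.xor_comm m, ← BitVec.xor_assoc, BitVec.xor_self, BitVec.zero_xor]
    have hyy : y = y' := Option.some.inj (by rw [← hy, ← hy', eh])
    rw [← hyy, hm] at ek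
    exact hne (eq_of_eq_off_k hD hD' h h' eh (fun x hx => eq_off_of_update_eq ek hx) ef)
  · refine Set.eq_empty_of_forall_notMem ?_
    rintro E ⟨⟨y, p, hc, z, rfl⟩, y', p', hc', z', e⟩
    obtain ⟨eh, ek, ef⟩ : _ ∧ _ ∧ _ := by simpa only [Prod.mk.injEq] using e
    obtain rfl := hc.mid_eq hc' (by rw [eh])
    have hy : y.1 = y'.1 := hc.left_eq hc' (by rw [ek])
    rw [← hy] at ef
    refine hr ?_
    have ef' : Function.update D.2.2 y.1 none = Function.update D'.2.2 y.1 none := by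
      simpa using congrArg (fun f => Function.update f y.1 none) ef
    rw [hc.removeChain_eq, hc'.removeChain_eq, eh, ek, ← hy, ef']

end CPO
end

section
/- Fix x ∈ [M] and an integer t with 0 ≤ t ≤ N. For each partial function D : [M] ⇀ [N] with x ∉ Dom(D), choose a set S_{x,D} ⊆ [N] with |S_{x,D}| ≥ N − t, let |S_{x,D}⟩ := |S_{x,D}|^{-1/2} Σ_{y ∈ S_{x,D}} |D[x→y]⟩, define G_{x,D} := 1 − |D⟩⟨D| − |S_{x,D}⟩⟨S_{x,D}| + |D⟩⟨S_{x,D}| + |S_{x,D}⟩⟨D| on span{|D[x→y]⟩ : y ∈ [N] ∪ {⊥}}, and set G_x := ⊕_{D : x ∉ Dom(D)} G_{x,D}. Then there is a universal constant C > 0 (independent of M, N, t and the choice of sets) such that the operator norm satisfies ‖fC_x − G_x‖ ≤ C·√(t/N). -/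
/-!
Write `b = |D⟩`, `u = |+_{x,D}⟩`, `v = |S_{x,D}⟩` and `d = u - v`. On the block of `D` the
difference of the two operators is `|d⟩⟨b| + |b⟩⟨d| - |d⟩⟨u| - |v⟩⟨d|` (`blockCorr_sub`), so each of
the four terms has `d` as one factor and a vector of norm at most `1` as the other. Vectors of
different blocks are orthogonal, so summing over the blocks costs nothing in operator norm
(`norm_sum_ketbra_le`, a Bessel-type estimate). It remains to bound `d`: with `k = |S|` and
`k > 0`, `‖d‖² = 2 - 2 √(k / N) ≤ 2 (1 - k / N) ≤ 2 t / N` (`norm_diff_le`); an empty `S` forces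
`t = N`, and then `v = 0` and `‖d‖ = 1`.
-/

/-! Compressed-oracle Hilbert space over function databases `[M] ⇀ [N]`. -/

namespace CPO

/-- A function database: a partial function `[M] ⇀ [N]`. -/
abbrev DBf (M N : ℕ) := Fin M → Option (Fin N)

/-- The Hilbert space with orthonormal basis indexed by databases. -/
abbrev HD (M N : ℕ) := EuclideanSpace ℂ (DBf M N)

/-- Basis vector `|D⟩`. -/
noncomputable def eD {M N : ℕ} (D : DBf M N) : HD M N := EuclideanSpace.single D 1

/-- `|a⟩⟨b|` as an operator: `ψ ↦ ⟪b, ψ⟫ • a`. -/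
noncomputable def ketbra {M N : ℕ} (a b : HD M N) : HD M N →L[ℂ] HD M N :=
  (innerSL ℂ b).smulRight a

/-- The block correction `|plus⟩⟨base| + |base⟩⟨plus| − |plus⟩⟨plus| − |base⟩⟨base|`. -/
noncomputable def blockCorr {M N : ℕ} (base plus : HD M N) : HD M N →L[ℂ] HD M N :=
  ketbra plus base + ketbra base plus - ketbra plus plus - ketbra base base

/-- `|+_{x,D}⟩ = N^{-1/2} Σ_y |D[x→y]⟩`. -/
noncomputable def plusD {M N : ℕ} (x : Fin M) (D : DBf M N) : HD M N :=
  (((Real.sqrt N : ℝ) : ℂ))⁻¹ • ∑ y : Fin N, eD (Function.update D x (some y))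

/-- The function compression operator `fC_x`. -/
noncomputable def fC {M N : ℕ} (x : Fin M) : HD M N →L[ℂ] HD M N :=
  1 + ∑ D : DBf M N, if D x = none then blockCorr (eD D) (plusD x D) else 0

/-- `|S_{x,D}⟩ = |S|^{-1/2} Σ_{y∈S} |D[x→y]⟩`. -/
noncomputable def svecD {M N : ℕ} (x : Fin M) (S : Finset (Fin N)) (D : DBf M N) : HD M N :=
  (((Real.sqrt S.card : ℝ) : ℂ))⁻¹ • ∑ y ∈ S, eD (Function.update D x (some y))

/-- The modified compression operator `G_x` determined by the family of sets
`S_{x,D}`. -/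
noncomputable def Gop {M N : ℕ} (x : Fin M) (S : DBf M N → Finset (Fin N)) :
    HD M N →L[ℂ] HD M N :=
  1 + ∑ D : DBf M N, if D x = none then blockCorr (eD D) (svecD x (S D) D) else 0

end CPO
namespace CPO

/-- Pythagoras for a linear combination of pairwise orthogonal vectors of norm at most `α`. -/
lemma norm_sq_sum_smul_le {ι H : Type*} [NormedAddCommGroup H] [InnerProductSpace ℂ H]
    (s : Finset ι) (a : ι → H) (z : ι → ℂ) (α : ℝ)
    (ho : ∀ i ∈ s, ∀ j ∈ s, i ≠ j → inner ℂ (a i) (a j) = 0)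
    (hn : ∀ i ∈ s, ‖a i‖ ≤ α) :
    ‖∑ i ∈ s, z i • a i‖ ^ 2 ≤ α ^ 2 * ∑ i ∈ s, ‖z i‖ ^ 2 := by
  have h : ‖∑ i ∈ s, z i • a i‖ ^ 2 = ∑ i ∈ s, ‖z i • a i‖ ^ 2 := by
    have hc : ((‖∑ i ∈ s, z i • a i‖ ^ 2 : ℝ) : ℂ) = ((∑ i ∈ s, ‖z i • a i‖ ^ 2 : ℝ) : ℂ) := by
      push_cast
      refine (inner_self_eq_norm_sq_to_K (𝕜 := ℂ) (∑ i ∈ s, z i • a i)).symm.trans ?_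
      rw [sum_inner]
      refine Finset.sum_congr rfl fun i hi => ?_
      rw [inner_sum, Finset.sum_eq_single_of_mem i hi, inner_self_eq_norm_sq_to_K]
      · rfl
      · intro j hj hji
        rw [inner_smul_left, inner_smul_right, ho i hi j hj hji.symm, mul_zero, mul_zero]
    exact_mod_cast hc
  rw [h, Finset.mul_sum]
  refine Finset.sum_le_sum fun i hi => ?_
  rw [norm_smul, mul_pow, mul_comm]
  gcongr
  exact hn i hi

/-- Bessel's inequality for pairwise orthogonal vectors of norm at most `γ`. -/
lemma bessel_le {ι H : Type*} [NormedAddCommGroup H] [InnerProductSpace ℂ H]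
    (s : Finset ι) (c : ι → H) (γ : ℝ)
    (ho : ∀ i ∈ s, ∀ j ∈ s, i ≠ j → inner ℂ (c i) (c j) = 0)
    (hn : ∀ i ∈ s, ‖c i‖ ≤ γ) (ψ : H) :
    ∑ i ∈ s, ‖(inner ℂ (c i) ψ : ℂ)‖ ^ 2 ≤ (γ * ‖ψ‖) ^ 2 := by
  set w := ∑ i ∈ s, (inner ℂ (c i) ψ : ℂ) • c i with hw
  set q := ∑ i ∈ s, ‖(inner ℂ (c i) ψ : ℂ)‖ ^ 2 with hq
  have hq0 : 0 ≤ q := Finset.sum_nonneg fun i _ => by positivity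
  have h1 : ‖w‖ ^ 2 ≤ γ ^ 2 * q := norm_sq_sum_smul_le s c _ γ ho hn
  have h2 : (inner ℂ w ψ : ℂ) = (q : ℂ) := by
    rw [hw, sum_inner, hq]
    push_cast
    refine Finset.sum_congr rfl fun i _ => ?_
    rw [inner_smul_left, RCLike.conj_mul]
    rfl
  have h3 : q ≤ ‖w‖ * ‖ψ‖ := by
    have := norm_inner_le_norm (𝕜 := ℂ) w ψ
    rwa [h2, Complex.norm_real, Real.norm_of_nonneg hq0] at this
  have h4 : q * q ≤ (γ * ‖ψ‖) ^ 2 * q := by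
    calc q * q ≤ (‖w‖ * ‖ψ‖) * (‖w‖ * ‖ψ‖) := mul_self_le_mul_self hq0 h3
      _ = ‖w‖ ^ 2 * ‖ψ‖ ^ 2 := by ring
      _ ≤ (γ ^ 2 * q) * ‖ψ‖ ^ 2 := by gcongr
      _ = _ := by ring
  rcases hq0.eq_or_lt with h | h
  · rw [← h]; positivity
  · exact le_of_mul_le_mul_right h4 h

/-- A sum of `|a_D⟩⟨c_D|` over orthogonal families has norm at most the largest norm of a term. -/
lemma norm_sum_ketbra_le {M N : ℕ} (s : Finset (DBf M N)) (a c : DBf M N → HD M N) (α γ : ℝ)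
    (hα : 0 ≤ α) (hγ : 0 ≤ γ)
    (hao : ∀ i ∈ s, ∀ j ∈ s, i ≠ j → inner ℂ (a i) (a j) = 0)
    (hco : ∀ i ∈ s, ∀ j ∈ s, i ≠ j → inner ℂ (c i) (c j) = 0)
    (ha : ∀ i ∈ s, ‖a i‖ ≤ α) (hc : ∀ i ∈ s, ‖c i‖ ≤ γ) :
    ‖∑ D ∈ s, ketbra (a D) (c D)‖ ≤ α * γ := by
  refine ContinuousLinearMap.opNorm_le_bound _ (by positivity) fun ψ => ?_
  have h : (∑ D ∈ s, ketbra (a D) (c D)) ψ = ∑ D ∈ s, (inner ℂ (c D) ψ : ℂ) • a D := by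
    simp [ketbra]
  rw [h]
  refine le_of_sq_le_sq ?_ (by positivity)
  calc _ ≤ α ^ 2 * ∑ i ∈ s, ‖(inner ℂ (c i) ψ : ℂ)‖ ^ 2 := norm_sq_sum_smul_le s a _ α hao ha
    _ ≤ α ^ 2 * (γ * ‖ψ‖) ^ 2 := by gcongr; exact bessel_le s c γ hco hc ψ
    _ = _ := by ring

lemma blockCorr_sub {M N : ℕ} (b u v : HD M N) :
    blockCorr b u - blockCorr b v =
      ketbra (u - v) b + ketbra b (u - v) - ketbra (u - v) u - ketbra v (u - v) := by
  ext1 ψ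
  simp only [blockCorr, ketbra, sub_apply, add_apply,
    ContinuousLinearMap.smulRight_apply, innerSL_apply_apply, inner_sub_left, sub_smul, smul_sub]
  abel

/-- `v` lies in the block of `D`, the span of the `|D[x→y]⟩` with `y ∈ [N] ∪ {⊥}`, when `D` is
undefined at `x`. -/
def InBlock {M N : ℕ} (x : Fin M) (D : DBf M N) (v : HD M N) : Prop :=
  ∀ E : DBf M N, Function.update E x none ≠ D → v E = 0

lemma InBlock.inner_eq_zero {M N : ℕ} {x : Fin M} {D D' : DBf M N} {v w : HD M N}
    (hv : InBlock x D v) (hw : InBlock x D' w) (h : D ≠ D') : inner ℂ v w = 0 := by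
  rw [PiLp.inner_apply]
  refine Finset.sum_eq_zero fun E _ => ?_
  by_cases hE : Function.update E x none = D
  · rw [hw E (by rw [hE]; exact h), inner_zero_right]
  · rw [hv E hE, inner_zero_left]

lemma InBlock.sub {M N : ℕ} {x : Fin M} {D : DBf M N} {v w : HD M N}
    (hv : InBlock x D v) (hw : InBlock x D w) : InBlock x D (v - w) := fun E hE => by
  rw [PiLp.sub_apply, hv E hE, hw E hE, sub_zero]

lemma inBlock_eD {M N : ℕ} {x : Fin M} {D : DBf M N} (hD : D x = none) :
    InBlock x D (eD D) := fun E hE => by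
  have : E ≠ D := by
    rintro rfl
    exact hE (by rw [← hD, Function.update_eq_self])
  simp [eD, this]

/-- The superposition `Σ_y f(y) |D[x→y]⟩` with real amplitudes `f`. -/
noncomputable def blk {M N : ℕ} (x : Fin M) (D : DBf M N) (f : Fin N → ℝ) : HD M N :=
  ∑ y, (f y : ℂ) • eD (Function.update D x (some y))

lemma inBlock_blk {M N : ℕ} {x : Fin M} {D : DBf M N} (hD : D x = none) (f : Fin N → ℝ) :
    InBlock x D (blk x D f) := fun E hE => by
  have : ∀ y : Fin N, E ≠ Function.update D x (some y) := by
    rintro y rfl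
    exact hE (by rw [Function.update_idem, ← hD, Function.update_eq_self])
  simp [blk, eD, this]

lemma norm_sq_blk {M N : ℕ} (x : Fin M) (D : DBf M N) (f : Fin N → ℝ) :
    ‖blk x D f‖ ^ 2 = ∑ y, f y ^ 2 := by
  have ho : Orthonormal ℂ (fun y : Fin N => eD (Function.update D x (some y))) :=
    (EuclideanSpace.orthonormal_single (𝕜 := ℂ) (ι := DBf M N)).comp _
      ((Function.update_injective D x).comp (Option.some_injective _))
  have hc : ((‖blk x D f‖ ^ 2 : ℝ) : ℂ) = ((∑ y, f y ^ 2 : ℝ) : ℂ) := by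
    push_cast
    refine (inner_self_eq_norm_sq_to_K (𝕜 := ℂ) (blk x D f)).symm.trans ?_
    rw [blk, ho.inner_sum]
    refine Finset.sum_congr rfl fun i _ => ?_
    rw [Complex.conj_ofReal, sq]
  exact_mod_cast hc

lemma blk_sub {M N : ℕ} (x : Fin M) (D : DBf M N) (f g : Fin N → ℝ) :
    blk x D f - blk x D g = blk x D (fun y => f y - g y) := by
  simp [blk, sub_smul]

lemma plusD_eq {M N : ℕ} (x : Fin M) (D : DBf M N) :
    plusD x D = blk x D (fun _ => (Real.sqrt N)⁻¹) := by
  simp [plusD, blk, Finset.smul_sum]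

lemma svecD_eq {M N : ℕ} (x : Fin M) (S : Finset (Fin N)) (D : DBf M N) :
    svecD x S D = blk x D (fun y => if y ∈ S then (Real.sqrt S.card)⁻¹ else 0) := by
  have h : ∀ y : Fin N, (((if y ∈ S then (Real.sqrt S.card)⁻¹ else 0 : ℝ) : ℂ)) •
      (eD (Function.update D x (some y)) : HD M N) =
      if y ∈ S then ((Real.sqrt S.card : ℝ) : ℂ)⁻¹ • eD (Function.update D x (some y)) else 0 := by
    intro y
    split_ifs <;> simp
  simp only [svecD, blk, h, Finset.smul_sum]
  rw [Finset.sum_ite_mem, Finset.univ_inter]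

lemma norm_plusD_le {M N : ℕ} (x : Fin M) (D : DBf M N) : ‖plusD x D‖ ≤ 1 := by
  refine le_of_sq_le_sq ?_ zero_le_one
  rw [plusD_eq, norm_sq_blk]
  simp only [inv_pow, Nat.cast_nonneg, Real.sq_sqrt, Finset.sum_const, Finset.card_univ,
    Fintype.card_fin, nsmul_eq_mul, one_pow]
  exact mul_inv_le_one

lemma norm_svecD_le {M N : ℕ} (x : Fin M) (S : Finset (Fin N)) (D : DBf M N) :
    ‖svecD x S D‖ ≤ 1 := by
  refine le_of_sq_le_sq ?_ zero_le_one
  rw [svecD_eq, norm_sq_blk]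
  simp only [ite_pow, inv_pow, Nat.cast_nonneg, Real.sq_sqrt, ne_eq, OfNat.ofNat_ne_zero,
    not_false_eq_true, zero_pow, Finset.sum_ite_mem, Finset.univ_inter, Finset.sum_const,
    nsmul_eq_mul, one_pow]
  exact mul_inv_le_one

/-- The uniform superpositions over `[N]` and over a set missing at most `t` points are
`O(√(t/N))`-close; this also covers the empty set, where `svecD` is `0`. -/
lemma norm_diff_le {M N : ℕ} (hN : 1 ≤ N) (x : Fin M) (S : Finset (Fin N)) (D : DBf M N) (t : ℕ)
    (hS : N - t ≤ S.card) :
    ‖plusD x D - svecD x S D‖ ≤ 2 * Real.sqrt ((t : ℝ) / N) := by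
  have hN0 : (0 : ℝ) < N := by exact_mod_cast hN
  have hkt : (N : ℝ) ≤ S.card + t := by exact_mod_cast (by omega : N ≤ S.card + t)
  have hkN : (S.card : ℝ) ≤ N := by
    exact_mod_cast (Finset.card_le_univ S).trans_eq (Fintype.card_fin N)
  refine le_of_sq_le_sq ?_ (by positivity)
  rw [mul_pow, Real.sq_sqrt (by positivity)]
  rcases Nat.eq_zero_or_pos S.card with h0 | hpos
  · have hS0 : S = ∅ := Finset.card_eq_zero.mp h0
    have hv : svecD x S D = 0 := by simp [svecD, hS0]
    have h1 : (1 : ℝ) ≤ t / N := by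
      rw [le_div_iff₀ hN0]
      simpa [h0] using hkt
    have h2 : ‖plusD x D‖ ^ 2 ≤ 1 := pow_le_one₀ (norm_nonneg _) (norm_plusD_le x D)
    rw [hv, sub_zero]
    linarith
  · have hk0 : (0 : ℝ) < S.card := by exact_mod_cast hpos
    set a := Real.sqrt N with ha
    set b := Real.sqrt S.card with hb
    have ha0 : 0 < a := Real.sqrt_pos.mpr hN0
    have hb0 : 0 < b := Real.sqrt_pos.mpr hk0
    have haN : (N : ℝ) = a ^ 2 := (Real.sq_sqrt hN0.le).symm
    have hbk : (S.card : ℝ) = b ^ 2 := (Real.sq_sqrt hk0.le).symm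
    have hba : b ≤ a := Real.sqrt_le_sqrt hkN
    have hpt : ∀ y : Fin N, (a⁻¹ - if y ∈ S then b⁻¹ else 0) ^ 2 =
        a⁻¹ ^ 2 + if y ∈ S then b⁻¹ ^ 2 - 2 * a⁻¹ * b⁻¹ else 0 := by
      intro y
      split_ifs <;> ring
    have hsum : ‖plusD x D - svecD x S D‖ ^ 2 = 2 - 2 * (b / a) := by
      rw [plusD_eq, svecD_eq, blk_sub, norm_sq_blk, Finset.sum_congr rfl fun y _ => hpt y,
        Finset.sum_add_distrib, Finset.sum_ite_mem, Finset.univ_inter, Finset.sum_const,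
        Finset.sum_const, Finset.card_univ, Fintype.card_fin, nsmul_eq_mul, nsmul_eq_mul, haN, hbk]
      have e1 : a ^ 2 * a⁻¹ ^ 2 = 1 := by field_simp
      have e2 : b ^ 2 * (b⁻¹ ^ 2 - 2 * a⁻¹ * b⁻¹) = 1 - 2 * (b / a) := by field_simp
      rw [e1, e2]
      ring
    have hr0 : 0 ≤ b / a := (div_pos hb0 ha0).le
    have hr1 : b / a ≤ 1 := (div_le_one ha0).mpr hba
    have hr2 : 1 - (b / a) ^ 2 ≤ t / N := by
      rw [div_pow, ← haN, ← hbk, le_div_iff₀ hN0, sub_mul, div_mul_cancel₀ _ hN0.ne']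
      linarith
    have ht0 : (0 : ℝ) ≤ t / N := div_nonneg t.cast_nonneg hN0.le
    rw [hsum]
    -- `r = b / a` lies in `[0, 1]`, so `1 - r ≤ 1 - r ^ 2 ≤ t / N`.
    nlinarith

/-- Any compression operator built from near-complete output
sets is `O(√(t/N))`-close in operator norm to the standard compression. -/
theorem compression_mod_close :
    ∃ C : ℝ, 0 < C ∧ ∀ (M N : ℕ), 1 ≤ M → 1 ≤ N → ∀ (x : Fin M) (t : ℕ), t ≤ N →
      ∀ S : DBf M N → Finset (Fin N), (∀ D : DBf M N, D x = none → N - t ≤ (S D).card) →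
      ‖fC x - Gop x S‖ ≤ C * Real.sqrt ((t : ℝ) / N) := by
  refine ⟨8, by norm_num, fun M N _ hN x t _ S hS => ?_⟩
  set δ := Real.sqrt ((t : ℝ) / N) with hδ
  have hδ0 : 0 ≤ δ := Real.sqrt_nonneg _
  set s : Finset (DBf M N) := Finset.univ.filter fun D => D x = none with hs
  set d : DBf M N → HD M N := fun D => plusD x D - svecD x (S D) D with hd
  have hsx : ∀ D ∈ s, D x = none := fun D hD => (Finset.mem_filter.mp hD).2
  have key : fC x - Gop x S = ∑ D ∈ s, ketbra (d D) (eD D) + ∑ D ∈ s, ketbra (eD D) (d D)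
      - ∑ D ∈ s, ketbra (d D) (plusD x D) - ∑ D ∈ s, ketbra (svecD x (S D) D) (d D) := by
    rw [fC, Gop, add_sub_add_left_eq_sub, ← Finset.sum_filter, ← Finset.sum_filter,
      ← Finset.sum_sub_distrib, ← Finset.sum_add_distrib, ← Finset.sum_sub_distrib,
      ← Finset.sum_sub_distrib]
    exact Finset.sum_congr rfl fun D _ => blockCorr_sub _ _ _
  have ortho : ∀ a : DBf M N → HD M N, (∀ D ∈ s, InBlock x D (a D)) →
      ∀ i ∈ s, ∀ j ∈ s, i ≠ j → inner ℂ (a i) (a j) = 0 :=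
    fun a ha i hi j hj hij => (ha i hi).inner_eq_zero (ha j hj) hij
  have oe := ortho eD fun D hD => inBlock_eD (hsx D hD)
  have op := ortho (plusD x) fun D hD => by
    rw [plusD_eq]; exact inBlock_blk (hsx D hD) _
  have ov := ortho (fun D => svecD x (S D) D) fun D hD => by
    rw [svecD_eq]; exact inBlock_blk (hsx D hD) _
  have od := ortho d fun D hD => by
    simp only [hd]
    rw [plusD_eq, svecD_eq]
    exact (inBlock_blk (hsx D hD) _).sub (inBlock_blk (hsx D hD) _)
  have nd : ∀ D ∈ s, ‖d D‖ ≤ 2 * δ := fun D hD => norm_diff_le hN x (S D) D t (hS D (hsx D hD))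
  have ne : ∀ D ∈ s, ‖(eD D : HD M N)‖ ≤ 1 := fun D _ => by simp [eD]
  have h2 : 0 ≤ 2 * δ := by positivity
  have b1 := norm_sum_ketbra_le s d eD _ _ h2 zero_le_one od oe nd ne
  have b2 := norm_sum_ketbra_le s eD d _ _ zero_le_one h2 oe od ne nd
  have b3 := norm_sum_ketbra_le s d (plusD x) _ _ h2 zero_le_one od op nd
    fun D _ => norm_plusD_le x D
  have b4 := norm_sum_ketbra_le s (fun D => svecD x (S D) D) d _ _ zero_le_one h2 ov od
    (fun D _ => norm_svecD_le x (S D) D) nd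
  rw [key]
  refine (norm_sub_le _ _).trans ?_
  refine (add_le_add_left ((norm_sub_le _ _).trans
    (add_le_add_left (norm_add_le _ _) _)) _).trans ?_
  linarith

end CPO
end
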